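/- arXiv:1607.05892 — 2 statements merged into one kernel-verified Lean document; each statement's English description precedes it below -/
import Mathlib

section
/- Let S be a thick generalized quadrangle and S' a thick full subquadrangle of S that is a geometrical hyperplane of S, with A, E and the canonical projection π : A → E as defined. Then every 2-cover γ : A → E (a cover all of whose point fibers and line fibers have exactly 2 elements) factorizes as γ = α ∘ π for some automorphism α of E. -/
namespace GQpaper

variable {P L : Type}

/-- Two points of a point-line geometry are collinear: they are equal or lie on a
common line. -/
def Collinear (I : P → L → Prop) (x y : P) : Prop :=
  x = y ∨ ∃ l : L, I x l ∧ I y l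

/-- Generalized quadrangle axioms: two distinct points are on at most one common line,
and for every non-incident point-line pair `(x, l)` there is a unique pair `(y, M)`
with `x I M`, `y I M`, `y I l`. -/
def IsGQ (I : P → L → Prop) : Prop :=
  (∀ x y : P, x ≠ y → ∀ M N : L, I x M → I y M → I x N → I y N → M = N) ∧
  (∀ (x : P) (l : L), ¬ I x l → ∃! p : P × L, I x p.2 ∧ I p.1 p.2 ∧ I p.1 l)

/-- Thick: every line has at least 3 points and every point is on at least 3 lines. -/
def Thick (I : P → L → Prop) : Prop :=
  (∀ l : L, ∃ x y z : P, x ≠ y ∧ y ≠ z ∧ x ≠ z ∧ I x l ∧ I y l ∧ I z l) ∧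
  (∀ x : P, ∃ l m n : L, l ≠ m ∧ m ≠ n ∧ l ≠ n ∧ I x l ∧ I x m ∧ I x n)

/-- The induced incidence relation on a subgeometry `(P', L')`. -/
def SubIncid (I : P → L → Prop) (P' : Set P) (L' : Set L) : ↥P' → ↥L' → Prop :=
  fun x l => I x.1 l.1

/-- A subgeometry is full if every point of the ambient geometry incident with one of
its lines belongs to it. -/
def IsFull (I : P → L → Prop) (P' : Set P) (L' : Set L) : Prop :=
  ∀ l ∈ L', ∀ x : P, I x l → x ∈ P'

/-- A geometrical hyperplane: each of its lines contains at least 2 of its points, and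
every line of the ambient geometry either is a line of the subgeometry all of whose
points lie in the subgeometry, or contains exactly one point of the subgeometry. -/
def IsGeomHyperplane (I : P → L → Prop) (P' : Set P) (L' : Set L) : Prop :=
  (∀ l ∈ L', ∃ x y : P, x ≠ y ∧ x ∈ P' ∧ y ∈ P' ∧ I x l ∧ I y l) ∧
  (∀ l : L, (l ∈ L' ∧ ∀ x : P, I x l → x ∈ P') ∨ (l ∉ L' ∧ ∃! x : P, I x l ∧ x ∈ P'))

/-- An ovoid of the subquadrangle `(P', L')`: a set of its points meeting every one of
its lines in exactly one point. -/
def IsOvoid (I : P → L → Prop) (P' : Set P) (L' : Set L) (O : Set P) : Prop :=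
  O ⊆ P' ∧ ∀ l ∈ L', ∃! x : P, x ∈ O ∧ I x l

/-- The ovoid of `S'` subtended by an external point `x`: the points of `P'` collinear
with `x`. -/
def subtendedOvoid (I : P → L → Prop) (P' : Set P) (x : P) : Set P :=
  {y : P | y ∈ P' ∧ Collinear I x y}

/-- The rosette of ovoids determined by a line `l` (not in the subquadrangle): the set
of the ovoids subtended by the external points of `l`. -/
def rosette (I : P → L → Prop) (P' : Set P) (l : L) : Set (Set P) :=
  {O : Set P | ∃ x : P, x ∉ P' ∧ I x l ∧ O = subtendedOvoid I P' x}

/-- Points of the geometry `A = S \ S'`. -/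
abbrev APoint (P' : Set P) : Type := {x : P // x ∉ P'}

/-- Lines of the geometry `A = S \ S'`. -/
abbrev ALine (L' : Set L) : Type := {l : L // l ∉ L'}

/-- Incidence in the geometry `A`. -/
def AIncid (I : P → L → Prop) (P' : Set P) (L' : Set L) :
    APoint P' → ALine L' → Prop :=
  fun x l => I x.1 l.1

/-- Points of the geometry `E`: the subtended ovoids of `S'`. -/
abbrev EPoint (I : P → L → Prop) (P' : Set P) : Type :=
  {O : Set P // ∃ x : P, x ∉ P' ∧ O = subtendedOvoid I P' x}

/-- Lines of the geometry `E`: the rosettes of subtended ovoids of `S'`. -/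
abbrev ELine (I : P → L → Prop) (P' : Set P) (L' : Set L) : Type :=
  {R : Set (Set P) // ∃ l : L, l ∉ L' ∧ R = rosette I P' l}

/-- Incidence in `E`: membership of an ovoid in a rosette. -/
def EIncid (I : P → L → Prop) (P' : Set P) (L' : Set L) :
    EPoint I P' → ELine I P' L' → Prop :=
  fun O R => O.1 ∈ R.1

/-- The canonical projection `π : A → E` on points. -/
def piPoint (I : P → L → Prop) (P' : Set P) : APoint P' → EPoint I P' :=
  fun x => ⟨subtendedOvoid I P' x.1, x.1, x.2, rfl⟩

/-- The canonical projection `π : A → E` on lines. -/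
def piLine (I : P → L → Prop) (P' : Set P) (L' : Set L) : ALine L' → ELine I P' L' :=
  fun l => ⟨rosette I P' l.1, l.1, l.2, rfl⟩

/-- A morphism of point-line geometries: preserves incidence. -/
def IsMorphism {P₁ L₁ P₂ L₂ : Type} (I₁ : P₁ → L₁ → Prop) (I₂ : P₂ → L₂ → Prop)
    (fp : P₁ → P₂) (fl : L₁ → L₂) : Prop :=
  ∀ x l, I₁ x l → I₂ (fp x) (fl l)

/-- A cover: a morphism which is locally bijective, i.e. for every point `x` it induces
a bijection between the lines through `x` and the lines through `fp x`, and dually. -/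
def IsCover {P₁ L₁ P₂ L₂ : Type} (I₁ : P₁ → L₁ → Prop) (I₂ : P₂ → L₂ → Prop)
    (fp : P₁ → P₂) (fl : L₁ → L₂) : Prop :=
  IsMorphism I₁ I₂ fp fl ∧
  (∀ (x : P₁) (m : L₂), I₂ (fp x) m → ∃! l : L₁, I₁ x l ∧ fl l = m) ∧
  (∀ (l : L₁) (y : P₂), I₂ y (fl l) → ∃! x : P₁, I₁ x l ∧ fp x = y)

/-- An isomorphism of point-line geometries: a bijective morphism whose inverse is a
morphism, equivalently a pair of bijections under which incidence corresponds. -/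
def IsIso {P₁ L₁ P₂ L₂ : Type} (I₁ : P₁ → L₁ → Prop) (I₂ : P₂ → L₂ → Prop)
    (fp : P₁ → P₂) (fl : L₁ → L₂) : Prop :=
  Function.Bijective fp ∧ Function.Bijective fl ∧
  ∀ (x : P₁) (l : L₁), I₁ x l ↔ I₂ (fp x) (fl l)

/-- An automorphism of a point-line geometry. -/
def IsAuto (I : P → L → Prop) (fp : P → P) (fl : L → L) : Prop :=
  IsIso I I fp fl

/-- A finite GQ has order `(s, t)` if every line carries `s + 1` points and every point
carries `t + 1` lines. -/
def HasOrder (I : P → L → Prop) (s t : ℕ) : Prop :=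
  (∀ l : L, {x : P | I x l}.ncard = s + 1) ∧
  (∀ x : P, {l : L | I x l}.ncard = t + 1)

/-- Every subtended ovoid of `S'` is subtended by exactly `θ` external points. -/
def AllThetaSubtended (I : P → L → Prop) (P' : Set P) (θ : ℕ) : Prop :=
  ∀ x : P, x ∉ P' →
    {y : P | y ∉ P' ∧ subtendedOvoid I P' y = subtendedOvoid I P' x}.ncard = θ

/-- The perp of a set of points: all points collinear with every point of the set. -/
def perpSet (I : P → L → Prop) (X : Set P) : Set P :=
  {z : P | ∀ y ∈ X, Collinear I z y}

/-- The action of a permutation of the points of `S'` on subsets of `P'`. -/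
def ovMap (P' : Set P) (f : ↥P' → ↥P') (O : Set P) : Set P :=
  {z : P | ∃ y : ↥P', y.1 ∈ O ∧ (f y).1 = z}


theorem tri {I : P → L → Prop} (hGQ : IsGQ I) {x y z : P} {l M N : L} (h : ¬ I x l)
    (h1 : I x M) (h2 : I y M) (h3 : I y l) (h4 : I x N) (h5 : I z N) (h6 : I z l) :
    y = z ∧ M = N := by
  obtain ⟨p, _, hp⟩ := hGQ.2 x l h
  have a := hp (y, M) ⟨h1, h2, h3⟩
  have b := hp (z, N) ⟨h4, h5, h6⟩
  have c := a.trans b.symm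
  exact ⟨congrArg Prod.fst c, congrArg Prod.snd c⟩

theorem base_ex {I : P → L → Prop} {P' : Set P} {L' : Set L}
    (hHyp : IsGeomHyperplane I P' L') {l : L} (hl : l ∉ L') : ∃ p, I p l ∧ p ∈ P' := by
  rcases hHyp.2 l with h | h
  · exact absurd h.1 hl
  · exact h.2.exists

theorem base_uniq {I : P → L → Prop} {P' : Set P} {L' : Set L}
    (hHyp : IsGeomHyperplane I P' L') {l : L} (hl : l ∉ L') {p q : P}
    (h1 : I p l) (h2 : p ∈ P') (h3 : I q l) (h4 : q ∈ P') : p = q := by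
  rcases hHyp.2 l with h | h
  · exact absurd h.1 hl
  · exact h.2.unique ⟨h1, h2⟩ ⟨h3, h4⟩

theorem mem_O {I : P → L → Prop} {P' : Set P} {x p : P} (hx : x ∉ P') :
    p ∈ subtendedOvoid I P' x ↔ p ∈ P' ∧ ∃ l, I x l ∧ I p l := by
  constructor
  · rintro ⟨h1, h2 | h2⟩
    · subst h2; exact absurd h1 hx
    · exact ⟨h1, h2⟩
  · rintro ⟨h1, h2⟩
    exact ⟨h1, Or.inr h2⟩

/-- collinear external points share only the base point -/
theorem O_inter {I : P → L → Prop} {P' : Set P} {L' : Set L} (hGQ : IsGQ I)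
    (hFull : IsFull I P' L') (hHyp : IsGeomHyperplane I P' L') {y z p u : P} {l : L}
    (hy : y ∉ P') (hz : z ∉ P') (hyz : y ≠ z) (h1 : I y l) (h2 : I z l) (h3 : I p l)
    (hp : p ∈ P') (hu1 : u ∈ subtendedOvoid I P' y) (hu2 : u ∈ subtendedOvoid I P' z) :
    u = p := by
  rw [mem_O hy] at hu1
  rw [mem_O hz] at hu2
  obtain ⟨hu, M, hM1, hM2⟩ := hu1
  obtain ⟨_, N, hN1, hN2⟩ := hu2
  have hl : l ∉ L' := fun h => hy (hFull l h y h1)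
  by_cases hul : I u l
  · exact base_uniq hHyp hl hul hu h3 hp
  · exact absurd (tri hGQ hul hM2 hM1 h1 hN2 hN1 h2).1 hyz

theorem O_ne {I : P → L → Prop} {P' : Set P} {L' : Set L} (hGQ : IsGQ I) (hThick : Thick I)
    (hFull : IsFull I P' L') (hHyp : IsGeomHyperplane I P' L') {y q : P}
    (hy : y ∉ P') (hq : q ∈ P') :
    ∃ (l : L) (p : P), I y l ∧ I p l ∧ p ∈ P' ∧ p ≠ q := by
  obtain ⟨l, m, n, hlm, _, _, hl, hm, _⟩ := hThick.2 y
  have hl' : l ∉ L' := fun h => hy (hFull l h y hl)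
  have hm' : m ∉ L' := fun h => hy (hFull m h y hm)
  obtain ⟨p, hp1, hp2⟩ := base_ex hHyp hl'
  obtain ⟨r, hr1, hr2⟩ := base_ex hHyp hm'
  by_cases hpq : p = q
  · refine ⟨m, r, hm, hr1, hr2, ?_⟩
    rintro rfl
    subst hpq
    exact hlm (hGQ.1 y p (fun h => hy (h ▸ hp2)) l m hl hp1 hm hr1)
  · exact ⟨l, p, hl, hp1, hp2, hpq⟩

theorem two_pts {I : P → L → Prop} {P' : Set P} {L' : Set L} (hThick : Thick I)
    (hHyp : IsGeomHyperplane I P' L') {l : L} (hl : l ∉ L') (y : P) :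
    ∃ z, I z l ∧ z ∉ P' ∧ z ≠ y := by
  obtain ⟨a, b, c, hab, hbc, hac, ha, hb, hc⟩ := hThick.1 l
  have U := fun {p q : P} => @base_uniq P L I P' L' hHyp l hl p q
  by_contra hcon
  push Not at hcon
  have key : ∀ z, I z l → z ∈ P' ∨ z = y := fun z hz => by
    by_cases h : z ∈ P'
    · exact Or.inl h
    · exact Or.inr (hcon z hz h)
  rcases key a ha with h1 | h1 <;> rcases key b hb with h2 | h2 <;>
    rcases key c hc with h3 | h3
  · exact hab (U ha h1 hb h2)
  · exact hab (U ha h1 hb h2)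
  · exact hac (U ha h1 hc h3)
  · exact hbc (h2.trans h3.symm)
  · exact hbc (U hb h2 hc h3)
  · exact hac (h1.trans h3.symm)
  · exact hab (h1.trans h2.symm)
  · exact hab (h1.trans h2.symm)

theorem O_inj {I : P → L → Prop} {P' : Set P} {L' : Set L} (hGQ : IsGQ I) (hThick : Thick I)
    (hFull : IsFull I P' L') (hHyp : IsGeomHyperplane I P' L') {y z : P} {l : L}
    (hy : y ∉ P') (hz : z ∉ P') (h1 : I y l) (h2 : I z l)
    (h : subtendedOvoid I P' y = subtendedOvoid I P' z) : y = z := by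
  by_contra hyz
  have hl : l ∉ L' := fun h => hy (hFull l h y h1)
  obtain ⟨p, hp1, hp2⟩ := base_ex hHyp hl
  obtain ⟨m, q, hm, hq, hq', hqp⟩ := O_ne hGQ hThick hFull hHyp hy hp2
  have hqO : q ∈ subtendedOvoid I P' y := (mem_O hy).2 ⟨hq', m, hm, hq⟩
  exact hqp (O_inter hGQ hFull hHyp hy hz hyz h1 h2 hp1 hp2 hqO (h ▸ hqO))

theorem proj {I : P → L → Prop} {P' : Set P} {L' : Set L} (hGQ : IsGQ I)
    (hFull : IsFull I P' L') (hHyp : IsGeomHyperplane I P' L') {y p : P} {l : L}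
    (hl : l ∉ L') (hy : y ∉ P') (hp : p ∈ P') (hpl : I p l)
    (hpy : p ∉ subtendedOvoid I P' y) :
    ∃ (z : P) (M : L), z ∉ P' ∧ M ∉ L' ∧ I y M ∧ I z M ∧ I z l := by
  have hyl : ¬ I y l := fun h => hpy ((mem_O hy).2 ⟨hp, l, h, hpl⟩)
  obtain ⟨⟨z, M⟩, ⟨h1, h2, h3⟩, _⟩ := hGQ.2 y l hyl
  refine ⟨z, M, fun hz => ?_, fun h => hy (hFull M h y h1), h1, h2, h3⟩
  have := base_uniq hHyp hl h3 hz hpl hp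
  subst this
  exact hpy ((mem_O hy).2 ⟨hp, M, h1, h2⟩)

theorem fib2 {α β : Type} {f : α → β} {o : β} (h : (f ⁻¹' {o}).ncard = 2) {a b c : α}
    (ha : f a = o) (hb : f b = o) (hc : f c = o) : a = b ∨ a = c ∨ b = c := by
  obtain ⟨u, v, _, huv⟩ := Set.ncard_eq_two.1 h
  have K : ∀ t, f t = o → t = u ∨ t = v := fun t ht => by
    have : t ∈ f ⁻¹' {o} := ht
    rw [huv] at this
    simpa using this
  rcases K a ha with h1 | h1 <;> rcases K b hb with h2 | h2 <;> rcases K c hc with h3 | h3 <;>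
    simp [h1, h2, h3]

theorem fib_ex {α β : Type} {f : α → β} {o : β} (h : (f ⁻¹' {o}).ncard = 2) :
    ∃ a, f a = o := by
  obtain ⟨u, v, _, huv⟩ := Set.ncard_eq_two.1 h
  have : u ∈ f ⁻¹' {o} := by rw [huv]; simp
  exact ⟨u, this⟩

theorem fib_other {α β : Type} {f : α → β} {o : β} (h : (f ⁻¹' {o}).ncard = 2) (a : α) :
    ∃ b, f b = o ∧ b ≠ a := by
  obtain ⟨u, v, hne, huv⟩ := Set.ncard_eq_two.1 h
  have hu : u ∈ f ⁻¹' {o} := by rw [huv]; simp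
  have hv : v ∈ f ⁻¹' {o} := by rw [huv]; simp
  by_cases hua : u = a
  · exact ⟨v, hv, fun h => hne (hua.trans h.symm)⟩
  · exact ⟨u, hu, hua⟩

/-- lifting a path of length 3 -/
theorem lift_path {I : P → L → Prop} {P' : Set P} {L' : Set L}
    {gp : APoint P' → EPoint I P'} {gl : ALine L' → ELine I P' L'}
    (hcov : IsCover (AIncid I P' L') (EIncid I P' L') gp gl)
    {O O1 : EPoint I P'} {R1 : ELine I P' L'} {l : ALine L'}
    (h1 : EIncid I P' L' O R1) (h2 : EIncid I P' L' O1 R1) (h3 : EIncid I P' L' O1 (gl l)) :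
    ∃ (a x : APoint P') (M : ALine L'), gp a = O ∧ gp x = O1 ∧ gl M = R1 ∧
      AIncid I P' L' x l ∧ AIncid I P' L' x M ∧ AIncid I P' L' a M := by
  obtain ⟨x, ⟨hx1, rfl⟩, _⟩ := hcov.2.2 l O1 h3
  obtain ⟨M, ⟨hM1, rfl⟩, _⟩ := hcov.2.1 x R1 h2
  obtain ⟨a, ⟨ha1, rfl⟩, _⟩ := hcov.2.2 M O h1
  exact ⟨a, x, M, rfl, rfl, rfl, hx1, hM1, ha1⟩

theorem paths {I : P → L → Prop} {P' : Set P} {L' : Set L} (hGQ : IsGQ I)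
    {gp : APoint P' → EPoint I P'} {gl : ALine L' → ELine I P' L'}
    (hcov : IsCover (AIncid I P' L') (EIncid I P' L') gp gl)
    (hfibp : ∀ O : EPoint I P', (gp ⁻¹' {O}).ncard = 2)
    (hfibl : ∀ R : ELine I P' L', (gl ⁻¹' {R}).ncard = 2)
    {O O1 O2 O3 : EPoint I P'} {R R1 R2 R3 : ELine I P' L'} (hOR : ¬ EIncid I P' L' O R)
    (h1 : EIncid I P' L' O R1) (k1 : EIncid I P' L' O1 R1) (m1 : EIncid I P' L' O1 R)
    (h2 : EIncid I P' L' O R2) (k2 : EIncid I P' L' O2 R2) (m2 : EIncid I P' L' O2 R)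
    (h3 : EIncid I P' L' O R3) (k3 : EIncid I P' L' O3 R3) (m3 : EIncid I P' L' O3 R) :
    (O1 = O2 ∧ R1 = R2) ∨ (O1 = O3 ∧ R1 = R3) ∨ (O2 = O3 ∧ R2 = R3) := by
  obtain ⟨l, rfl⟩ := fib_ex (hfibl R)
  have key : ∀ (a x y : APoint P') (M N : ALine L'), gp a = O → AIncid I P' L' x l →
      AIncid I P' L' x M → AIncid I P' L' a M → AIncid I P' L' y l →
      AIncid I P' L' y N → AIncid I P' L' a N → gp x = gp y ∧ gl M = gl N := by
    intro a x y M N ha hx hxM haM hy hyN haN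
    have hal : ¬ I a.1 l.1 := fun h => hOR (ha ▸ hcov.1 a l h)
    obtain ⟨e1, e2⟩ := tri hGQ hal haM hxM hx haN hyN hy
    rw [Subtype.ext e1, Subtype.ext e2]
    exact ⟨rfl, rfl⟩
  obtain ⟨a1, x1, M1, ha1, hx1, hM1, s1, t1, u1⟩ := lift_path hcov h1 k1 m1
  obtain ⟨a2, x2, M2, ha2, hx2, hM2, s2, t2, u2⟩ := lift_path hcov h2 k2 m2
  obtain ⟨a3, x3, M3, ha3, hx3, hM3, s3, t3, u3⟩ := lift_path hcov h3 k3 m3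
  rw [← hx1, ← hx2, ← hx3, ← hM1, ← hM2, ← hM3]
  rcases fib2 (hfibp O) ha1 ha2 ha3 with e | e | e
  · subst e; exact Or.inl (key _ _ _ _ _ ha1 s1 t1 u1 s2 t2 u2)
  · subst e; exact Or.inr (Or.inl (key _ _ _ _ _ ha1 s1 t1 u1 s3 t3 u3))
  · subst e; exact Or.inr (Or.inr (key _ _ _ _ _ ha2 s2 t2 u2 s3 t3 u3))

theorem pi_mor {I : P → L → Prop} {P' : Set P} {L' : Set L} {x : P} {l : L} (hx : x ∉ P')
    (hl : l ∉ L') (h : I x l) :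
    EIncid I P' L' (piPoint I P' ⟨x, hx⟩) (piLine I P' L' ⟨l, hl⟩) :=
  ⟨x, hx, h, rfl⟩

theorem E_ext {I : P → L → Prop} {P' : Set P} {x y : P} (hx : x ∉ P') (hy : y ∉ P')
    (h : subtendedOvoid I P' x = subtendedOvoid I P' y) :
    piPoint I P' ⟨x, hx⟩ = piPoint I P' ⟨y, hy⟩ := Subtype.ext h

/-- a rosette whose base is not in the ovoid does not contain it -/
theorem not_inc {I : P → L → Prop} {P' : Set P} {L' : Set L} {x p : P} {l : L} (hx : x ∉ P')
    (hl : l ∉ L') (hp : p ∈ P') (hpl : I p l) (hpx : p ∉ subtendedOvoid I P' x) :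
    ¬ EIncid I P' L' (piPoint I P' ⟨x, hx⟩) (piLine I P' L' ⟨l, hl⟩) := by
  rintro ⟨y, hy, hyl, h⟩
  apply hpx
  change subtendedOvoid I P' x = _ at h
  rw [h]
  exact (mem_O hy).2 ⟨hp, l, hyl, hpl⟩

/-- E is a partial linear space -/
theorem E_pls {I : P → L → Prop} {P' : Set P} {L' : Set L}
    (hGQ : IsGQ I) (hThick : Thick I)
    (hFull : IsFull I P' L') (hHyp : IsGeomHyperplane I P' L')
    {gp : APoint P' → EPoint I P'} {gl : ALine L' → ELine I P' L'}
    (hcov : IsCover (AIncid I P' L') (EIncid I P' L') gp gl)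
    (hfibp : ∀ O : EPoint I P', (gp ⁻¹' {O}).ncard = 2)
    (hfibl : ∀ R : ELine I P' L', (gl ⁻¹' {R}).ncard = 2)
    {O O1 : EPoint I P'} {R1 R2 : ELine I P' L'} (hO : O ≠ O1)
    (h1 : EIncid I P' L' O R1) (h2 : EIncid I P' L' O1 R1)
    (h3 : EIncid I P' L' O R2) (h4 : EIncid I P' L' O1 R2) : R1 = R2 := by
  by_contra hR
  obtain ⟨R1, N, hN, rfl⟩ := R1
  obtain ⟨R2, M, hM, rfl⟩ := R2
  have h1s := h1
  have h2s := h2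
  have h3s := h3
  have h4s := h4
  obtain ⟨y1, hy1, hy1N, e1⟩ := h1
  obtain ⟨w, hw, hwN, e2⟩ := h2
  obtain ⟨y2, hy2, hy2M, e3⟩ := h3
  obtain ⟨z, hz, hzM, e4⟩ := h4
  have hNM : N ≠ M := by
    rintro rfl; exact hR rfl
  have hy1w : y1 ≠ w := by
    rintro rfl; exact hO (Subtype.ext (e1.trans e2.symm))
  have hy2z : y2 ≠ z := by
    rintro rfl; exact hO (Subtype.ext (e3.trans e4.symm))
  obtain ⟨q, hqN, hq⟩ := base_ex hHyp hN
  have hqM : I q M := by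
    obtain ⟨r, hrM, hr⟩ := base_ex hHyp hM
    have a : q ∈ subtendedOvoid I P' y2 := by
      rw [← e3, e1]; exact (mem_O hy1).2 ⟨hq, N, hy1N, hqN⟩
    have b : q ∈ subtendedOvoid I P' z := by
      rw [← e4, e2]; exact (mem_O hw).2 ⟨hq, N, hwN, hqN⟩
    rw [O_inter hGQ hFull hHyp hy2 hz hy2z hy2M hzM hrM hr a b]
    exact hrM
  obtain ⟨l, p, hwl, hpl, hp, hpq⟩ := O_ne hGQ hThick hFull hHyp hw hq
  have hl : l ∉ L' := fun h => hw (hFull l h w hwl)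
  have hpw : p ∈ subtendedOvoid I P' w := (mem_O hw).2 ⟨hp, l, hwl, hpl⟩
  have hpy1 : p ∉ subtendedOvoid I P' y1 := fun h =>
    hpq (O_inter hGQ hFull hHyp hy1 hw hy1w hy1N hwN hqN hq h hpw)
  have hpy2 : p ∉ subtendedOvoid I P' y2 := by rw [← e3, e1]; exact hpy1
  obtain ⟨w2, K, hw2, hK, hy2K, hw2K, hw2l⟩ := proj hGQ hFull hHyp hl hy2 hp hpl hpy2
  have hOy2 : O = piPoint I P' ⟨y2, hy2⟩ := Subtype.ext e3
  have hO1w : O1 = piPoint I P' ⟨w, hw⟩ := Subtype.ext e2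
  have hwM : ¬ I w M := fun h =>
    hNM (hGQ.1 w q (fun e => hw (e ▸ hq)) N M hwN hqN h hqM)
  have hww2 : w ≠ w2 := by
    rintro rfl
    have := (tri hGQ hwM hwN hqN hqM hw2K hy2K hy2M).1
    exact hy2 (this ▸ hq)
  have hne : O1 ≠ piPoint I P' ⟨w2, hw2⟩ := by
    rw [hO1w]
    intro h
    exact hww2 (O_inj hGQ hThick hFull hHyp hw hw2 hwl hw2l (congrArg Subtype.val h))
  have hOR : ¬ EIncid I P' L' O (piLine I P' L' ⟨l, hl⟩) := by
    rw [hOy2]; exact not_inc hy2 hl hp hpl hpy2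
  have m1 : EIncid I P' L' O1 (piLine I P' L' ⟨l, hl⟩) := by
    rw [hO1w]; exact pi_mor hw hl hwl
  have h5 : EIncid I P' L' O (piLine I P' L' ⟨K, hK⟩) := by
    rw [hOy2]; exact pi_mor hy2 hK hy2K
  rcases paths hGQ hcov hfibp hfibl hOR h1s h2s m1 h3s h4s m1 h5 (pi_mor hw2 hK hw2K)
    (pi_mor hw2 hl hw2l) with h | h | h
  · exact hR h.2
  · exact hne h.1
  · exact hne h.1

/-- points in a fiber of the cover subtend the same ovoid -/
theorem fib_sub {I : P → L → Prop} {P' : Set P} {L' : Set L}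
    (hGQ : IsGQ I) (hThick : Thick I)
    (hFull : IsFull I P' L') (hHyp : IsGeomHyperplane I P' L')
    {gp : APoint P' → EPoint I P'} {gl : ALine L' → ELine I P' L'}
    (hcov : IsCover (AIncid I P' L') (EIncid I P' L') gp gl)
    (hfibp : ∀ O : EPoint I P', (gp ⁻¹' {O}).ncard = 2)
    (hfibl : ∀ R : ELine I P' L', (gl ⁻¹' {R}).ncard = 2)
    {x y : APoint P'} (h : gp x = gp y) :
    subtendedOvoid I P' x.1 ⊆ subtendedOvoid I P' y.1 := by
  intro p hp
  by_contra hpy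
  obtain ⟨hpP, l, hxl, hpl⟩ := (mem_O x.2).1 hp
  have hl : l ∉ L' := fun h => x.2 (hFull l h _ hxl)
  obtain ⟨z, M, hz, hM, hyM, hzM, hzl⟩ := proj hGQ hFull hHyp hl y.2 hpP hpl hpy
  have linj : ∀ (a b : APoint P') (m : ALine L'), I a.1 m.1 → I b.1 m.1 → gp a = gp b → a = b :=
    fun a b m ha hb e =>
      (hcov.2.2 m (gp b) (hcov.1 b m hb)).unique ⟨ha, e⟩ ⟨hb, rfl⟩
  have hyl : ¬ I y.1 l := fun hyl => by
    have := linj x y ⟨l, hl⟩ hxl hyl h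
    exact hpy (this ▸ hp)
  have hxz : gp x ≠ gp ⟨z, hz⟩ := fun e => by
    have e1 := linj x ⟨z, hz⟩ ⟨l, hl⟩ hxl hzl e
    have e2 := linj y ⟨z, hz⟩ ⟨M, hM⟩ hyM hzM (h ▸ e)
    exact hpy ((e1.trans e2.symm) ▸ hp)
  have e : gl ⟨l, hl⟩ = gl ⟨M, hM⟩ := E_pls hGQ hThick hFull hHyp hcov hfibp hfibl hxz
    (hcov.1 x ⟨l, hl⟩ hxl) (hcov.1 ⟨z, hz⟩ ⟨l, hl⟩ hzl)
    (h ▸ hcov.1 y ⟨M, hM⟩ hyM) (hcov.1 ⟨z, hz⟩ ⟨M, hM⟩ hzM)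
  have := (hcov.2.1 ⟨z, hz⟩ (gl ⟨M, hM⟩) (hcov.1 ⟨z, hz⟩ ⟨M, hM⟩ hzM)).unique
    (y₁ := ⟨l, hl⟩) (y₂ := ⟨M, hM⟩) ⟨hzl, e⟩ ⟨hzM, rfl⟩
  have e2 : l = M := congrArg Subtype.val this
  subst e2
  exact hyl hyM

/-- at most two points subtend a given ovoid -/
theorem at_most_two {I : P → L → Prop} {P' : Set P} {L' : Set L}
    (hGQ : IsGQ I) (hThick : Thick I)
    (hFull : IsFull I P' L') (hHyp : IsGeomHyperplane I P' L')
    {gp : APoint P' → EPoint I P'} {gl : ALine L' → ELine I P' L'}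
    (hcov : IsCover (AIncid I P' L') (EIncid I P' L') gp gl)
    (hfibp : ∀ O : EPoint I P', (gp ⁻¹' {O}).ncard = 2)
    (hfibl : ∀ R : ELine I P' L', (gl ⁻¹' {R}).ncard = 2)
    {a b c : P} (ha : a ∉ P') (hb : b ∉ P') (hc : c ∉ P')
    (hab : subtendedOvoid I P' a = subtendedOvoid I P' b)
    (hac : subtendedOvoid I P' a = subtendedOvoid I P' c) : a = b ∨ a = c ∨ b = c := by
  obtain ⟨m, _, _, _, _, _, ham, _, _⟩ := hThick.2 a
  have hm : m ∉ L' := fun h => ha (hFull m h _ ham)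
  obtain ⟨q, hqm, hq⟩ := base_ex hHyp hm
  obtain ⟨t, htm, ht, hta⟩ := two_pts hThick hHyp hm a
  obtain ⟨l, p, htl, hpl, hp, hpq⟩ := O_ne hGQ hThick hFull hHyp ht hq
  have hl : l ∉ L' := fun h => ht (hFull l h _ htl)
  have hpa : p ∉ subtendedOvoid I P' a := fun h =>
    hpq (O_inter hGQ hFull hHyp ha ht hta.symm ham htm hqm hq h
      ((mem_O ht).2 ⟨hp, l, htl, hpl⟩))
  have hpb : p ∉ subtendedOvoid I P' b := hab ▸ hpa
  have hpc : p ∉ subtendedOvoid I P' c := hac ▸ hpa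
  obtain ⟨x, A, hx, hA, haA, hxA, hxl⟩ := proj hGQ hFull hHyp hl ha hp hpl hpa
  obtain ⟨y, B, hy, hB, hbB, hyB, hyl⟩ := proj hGQ hFull hHyp hl hb hp hpl hpb
  obtain ⟨z, C, hz, hC, hcC, hzC, hzl⟩ := proj hGQ hFull hHyp hl hc hp hpl hpc
  have key : ∀ {a b x y : P} {A B : L}, a ∉ P' → b ∉ P' →
      subtendedOvoid I P' a = subtendedOvoid I P' b → (hx : x ∉ P') → (hy : y ∉ P') →
      I a A → I x A → I x l → I b B → I y B → I y l →
      piPoint I P' ⟨x, hx⟩ = piPoint I P' ⟨y, hy⟩ → a = b := by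
    intro a b x y A B ha hb hab hx hy haA hxA hxl hbB hyB hyl e
    have := O_inj hGQ hThick hFull hHyp hx hy hxl hyl (congrArg Subtype.val e)
    subst this
    have hA : A ∉ L' := fun h => ha (hFull A h _ haA)
    obtain ⟨r, hrA, hr⟩ := base_ex hHyp hA
    have hrb : r ∈ subtendedOvoid I P' b := hab ▸ (mem_O ha).2 ⟨hr, A, haA, hrA⟩
    obtain ⟨_, D, hbD, hrD⟩ := (mem_O hb).1 hrb
    by_cases hbA : I b A
    · exact O_inj hGQ hThick hFull hHyp ha hb haA hbA hab
    · have := (tri hGQ hbA hbB hyB hxA hbD hrD hrA).1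
      exact absurd hr (this ▸ hx)
  have hOb : piPoint I P' ⟨a, ha⟩ = piPoint I P' ⟨b, hb⟩ := Subtype.ext hab
  have hOc : piPoint I P' ⟨a, ha⟩ = piPoint I P' ⟨c, hc⟩ := Subtype.ext hac
  rcases paths hGQ hcov hfibp hfibl (not_inc ha hl hp hpl hpa)
    (pi_mor ha hA haA) (pi_mor hx hA hxA) (pi_mor hx hl hxl)
    (hOb ▸ pi_mor hb hB hbB) (pi_mor hy hB hyB) (pi_mor hy hl hyl)
    (hOc ▸ pi_mor hc hC hcC) (pi_mor hz hC hzC) (pi_mor hz hl hzl) with h | h | h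
  · exact Or.inl (key ha hb hab hx hy haA hxA hxl hbB hyB hyl h.1)
  · exact Or.inr (Or.inl (key ha hc hac hx hz haA hxA hxl hcC hzC hzl h.1))
  · exact Or.inr (Or.inr (key hb hc (hab.symm.trans hac) hy hz hbB hyB hyl hcC hzC hzl h.1))

/-- every 2-cover `γ : A → E` factorizes as `γ = α ∘ π` for some
automorphism `α` of `E`. -/
theorem statement11 (I : P → L → Prop) (P' : Set P) (L' : Set L)
    (hGQ : IsGQ I) (hThick : Thick I)
    (hSubGQ : IsGQ (SubIncid I P' L')) (hSubThick : Thick (SubIncid I P' L'))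
    (hFull : IsFull I P' L') (hHyp : IsGeomHyperplane I P' L')
    (gp : APoint P' → EPoint I P') (gl : ALine L' → ELine I P' L')
    (hcov : IsCover (AIncid I P' L') (EIncid I P' L') gp gl)
    (hfibp : ∀ O : EPoint I P', (gp ⁻¹' {O}).ncard = 2)
    (hfibl : ∀ R : ELine I P' L', (gl ⁻¹' {R}).ncard = 2) :
    ∃ (αp : EPoint I P' → EPoint I P') (αl : ELine I P' L' → ELine I P' L'),
      IsAuto (EIncid I P' L') αp αl ∧
      gp = αp ∘ piPoint I P' ∧ gl = αl ∘ piLine I P' L' := by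
  have fsub : ∀ x y : APoint P', gp x = gp y → piPoint I P' x = piPoint I P' y :=
    fun x y h => Subtype.ext (Set.Subset.antisymm
      (fib_sub hGQ hThick hFull hHyp hcov hfibp hfibl h)
      (fib_sub hGQ hThick hFull hHyp hcov hfibp hfibl h.symm))
  have fsup : ∀ x y : APoint P', piPoint I P' x = piPoint I P' y → gp x = gp y := by
    intro x y h
    obtain ⟨x', hx', hne⟩ := fib_other (hfibp (gp x)) x
    have e := fsub x' x hx'
    rcases at_most_two hGQ hThick hFull hHyp hcov hfibp hfibl x.2 y.2 x'.2
      (congrArg Subtype.val h) (congrArg Subtype.val e.symm) with h1 | h1 | h1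
    · rw [Subtype.ext h1]
    · exact absurd (Subtype.ext h1).symm hne
    · rw [Subtype.ext h1, hx']
  have inc : ∀ (x : APoint P') (l : ALine L'),
      EIncid I P' L' (piPoint I P' x) (piLine I P' L' l) ↔ EIncid I P' L' (gp x) (gl l) := by
    intro x l
    constructor
    · rintro ⟨y, hy, hyl, e⟩
      rw [fsup x ⟨y, hy⟩ (Subtype.ext e)]
      exact hcov.1 ⟨y, hy⟩ l hyl
    · intro h
      obtain ⟨y, ⟨hyl, e⟩, _⟩ := hcov.2.2 l (gp x) h
      rw [← fsub y x e]
      exact pi_mor y.2 l.2 hyl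
  have lsub : ∀ l m : ALine L', gl l = gl m → piLine I P' L' l = piLine I P' L' m := by
    have : ∀ l m : ALine L', gl l = gl m → rosette I P' l.1 ⊆ rosette I P' m.1 := by
      rintro l m h O ⟨x, hx, hxl, rfl⟩
      have h1 := hcov.1 ⟨x, hx⟩ l hxl
      rw [h] at h1
      exact (inc ⟨x, hx⟩ m).2 h1
    exact fun l m h => Subtype.ext (Set.Subset.antisymm (this l m h) (this m l h.symm))
  have lsup : ∀ l m : ALine L', piLine I P' L' l = piLine I P' L' m → gl l = gl m := by
    intro l m h
    obtain ⟨p, _, _⟩ := base_ex hHyp l.2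
    obtain ⟨x, hxl, hx, _⟩ := two_pts hThick hHyp l.2 p
    obtain ⟨y, hyl, hy, hyx⟩ := two_pts hThick hHyp l.2 x
    have hne : gp ⟨x, hx⟩ ≠ gp ⟨y, hy⟩ := fun e =>
      hyx (O_inj hGQ hThick hFull hHyp hx hy hxl hyl (congrArg Subtype.val (fsub _ _ e))).symm
    exact E_pls hGQ hThick hFull hHyp hcov hfibp hfibl hne
      (hcov.1 ⟨x, hx⟩ l hxl) (hcov.1 ⟨y, hy⟩ l hyl)
      ((inc _ _).1 (h ▸ pi_mor hx l.2 hxl)) ((inc _ _).1 (h ▸ pi_mor hy l.2 hyl))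
  have sp : ∀ O : EPoint I P', ∃ x, piPoint I P' x = O := by
    rintro ⟨O, x, hx, rfl⟩
    exact ⟨⟨x, hx⟩, rfl⟩
  have sl : ∀ R : ELine I P' L', ∃ l, piLine I P' L' l = R := by
    rintro ⟨R, l, hl, rfl⟩
    exact ⟨⟨l, hl⟩, rfl⟩
  choose sP hsP using sp
  choose sL hsL using sl
  refine ⟨fun O => gp (sP O), fun R => gl (sL R), ⟨⟨?_, ?_⟩, ⟨?_, ?_⟩, ?_⟩, ?_, ?_⟩
  · intro O1 O2 h
    rw [← hsP O1, ← hsP O2]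
    exact fsub _ _ h
  · intro O
    obtain ⟨x, rfl⟩ := fib_ex (hfibp O)
    exact ⟨piPoint I P' x, fsup _ _ (hsP _)⟩
  · intro R1 R2 h
    rw [← hsL R1, ← hsL R2]
    exact lsub _ _ h
  · intro R
    obtain ⟨l, rfl⟩ := fib_ex (hfibl R)
    exact ⟨piLine I P' L' l, lsup _ _ (hsL _)⟩
  · intro O R
    have := inc (sP O) (sL R)
    rw [hsP, hsL] at this
    exact this
  · funext x
    exact fsup _ _ (hsP _).symm
  · funext l
    exact lsup _ _ (hsL _).symm

end GQpaper
end

section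
/- Let S be a finite generalized quadrangle of order (s,t) with s ≥ 2, and S' a proper full subquadrangle of order (s,t') such that t' ≠ 1, t = s·t', (θ−1)·t = s², and every subtended ovoid of S' is subtended by exactly θ points of S outside S', where θ > 1. Then the geometry E, whose points are the subtended ovoids of S' and whose lines are the rosettes, with incidence given by membership, is a semipartial geometry with parameters s* = s − 1, t* = t, α* = θ, μ* = θ(t − t'); that is: every line of E is incident with exactly s points; every point of E is incident with exactly t + 1 lines; two distinct points of E are incident with at most one common line; for every non-incident point-line pair (p,L) of E, the number of points incident with L that are collinear with p in E is 0 or θ; and any two non-collinear points of E have exactly θ(t − t') common collinear points. -/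
namespace GQpaper

variable {P L : Type}

/-- Collinearity of two points of the geometry `E`. -/
def ECol {P L : Type} (I : P → L → Prop) (P' : Set P) (L' : Set L)
    (O O' : EPoint I P') : Prop :=
  ∃ R : ELine I P' L', O.1 ∈ R.1 ∧ O'.1 ∈ R.1

/-- Working configuration: consequences of the hypotheses, in finset form. -/
structure Cfg [Fintype P] [Fintype L] (I : P → L → Prop) (P' : Set P) (L' : Set L)
    (s t t' : ℕ) : Prop where
  uniq : ∀ x y : P, x ≠ y → ∀ M N : L, I x M → I y M → I x N → I y N → M = N
  proj : ∀ (x : P) (l : L), ¬ I x l → ∃ y, I y l ∧ Collinear I x y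
  tri : ∀ (x : P) (l : L) (y y' : P), y ≠ y' → Collinear I x y → Collinear I x y' →
    I y l → I y' l → I x l
  ptsL : ∀ l : L, {x : P | I x l}.ncard = s + 1
  linesP : ∀ x : P, {l : L | I x l}.ncard = t + 1
  linesP' : ∀ x ∈ P', {l : L | l ∈ L' ∧ I x l}.ncard = t' + 1
  two : ∀ x y l, x ∈ P' → y ∈ P' → x ≠ y → I x l → I y l → l ∈ L'
  full : ∀ l ∈ L', ∀ x : P, I x l → x ∈ P'
  exL : ∃ l, l ∈ L'
  hs : 2 ≤ s
  ht' : 1 ≤ t'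
  ht : t = s * t'

theorem col_symm {I : P → L → Prop} {x y : P} (h : Collinear I x y) : Collinear I y x := by
  rcases h with h | ⟨l, a, b⟩
  · exact Or.inl h.symm
  · exact Or.inr ⟨l, b, a⟩

theorem gq_tri {I : P → L → Prop} (hGQ : IsGQ I) (x : P) (l : L) (y y' : P) (hne : y ≠ y')
    (h1 : Collinear I x y) (h2 : Collinear I x y') (hy : I y l) (hy' : I y' l) : I x l := by
  by_contra hx
  obtain ⟨p, _, hp⟩ := hGQ.2 x l hx
  rcases h1 with rfl | ⟨m, a, b⟩
  · exact hx hy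
  rcases h2 with rfl | ⟨n, c, d⟩
  · exact hx hy'
  have e1 := hp (y, m) ⟨a, b, hy⟩
  have e2 := hp (y', n) ⟨c, d, hy'⟩
  exact hne (congrArg Prod.fst (e1.trans e2.symm))

theorem sub_pts {I : P → L → Prop} {P' : Set P} {L' : Set L} {s t' : ℕ}
    (h : HasOrder (SubIncid I P' L') s t') (x : P) (hx : x ∈ P') :
    {l : L | l ∈ L' ∧ I x l}.ncard = t' + 1 := by
  rw [← h.2 ⟨x, hx⟩, ← Set.ncard_image_of_injective _ Subtype.val_injective]
  congr 1
  ext l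
  simp [SubIncid, and_comm]

theorem mkCfg [Fintype P] [Fintype L]
    (I : P → L → Prop) (P' : Set P) (L' : Set L) (s t t' θ : ℕ)
    (hGQ : IsGQ I) (hOrd : HasOrder I s t) (hs : 2 ≤ s)
    (hSubGQ : IsGQ (SubIncid I P' L'))
    (hSubOrd : HasOrder (SubIncid I P' L') s t')
    (hFull : IsFull I P' L')
    (hProper : P' ≠ Set.univ ∨ L' ≠ Set.univ)
    (htst : t = s * t') (hθt : (θ - 1) * t = s ^ 2)
    (hθsub : AllThetaSubtended I P' θ) : Cfg I P' L' s t t' := by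
  have ht' : 1 ≤ t' := by
    rcases Nat.eq_zero_or_pos t' with h | h
    · subst h
      simp at htst
      subst htst
      have : 0 < s ^ 2 := by positivity
      omega
    · exact h
  have hln : ∀ x ∈ P', ∃ l ∈ L', I x l := by
    intro x hx
    have h := sub_pts hSubOrd x hx
    have : {l : L | l ∈ L' ∧ I x l}.Nonempty := by
      rw [← Set.ncard_pos]; omega
    exact this
  have htwo : ∀ x y l, x ∈ P' → y ∈ P' → x ≠ y → I x l → I y l → l ∈ L' := by
    intro x y l hx hy hxy h1 h2
    obtain ⟨M, hM, hyM⟩ := hln y hy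
    by_cases hxM : I x M
    · rw [hGQ.1 x y hxy l M h1 h2 hxM hyM]; exact hM
    · obtain ⟨⟨z, N⟩, ⟨a, b, c⟩, _⟩ := hSubGQ.2 ⟨x, hx⟩ ⟨M, hM⟩ hxM
      obtain ⟨p, _, hp⟩ := hGQ.2 x M hxM
      have e1 := hp (z.1, N.1) ⟨a, b, c⟩
      have e2 := hp (y, l) ⟨h1, h2, hyM⟩
      have := congrArg Prod.snd (e1.trans e2.symm)
      simp only at this
      rw [← this]; exact N.2
  refine ⟨hGQ.1, ?_, gq_tri hGQ, hOrd.1, hOrd.2, sub_pts hSubOrd, htwo, hFull, ?_, hs, ht', htst⟩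
  · intro x l h
    obtain ⟨p, ⟨a, b, c⟩, _⟩ := hGQ.2 x l h
    exact ⟨p.1, c, Or.inr ⟨p.2, a, b⟩⟩
  · by_contra hL
    push Not at hL
    have hP : ∀ x, x ∉ P' := fun x hx => by
      obtain ⟨l, h, _⟩ := hln x hx
      exact hL l h
    have hxl : ∃ x : P, True := by
      by_contra hne
      push Not at hne
      have hLe : ∀ l : L, False := by
        intro l
        have := hOrd.1 l
        have h2 : {x : P | I x l}.Nonempty := by rw [← Set.ncard_pos]; omega
        obtain ⟨x, _⟩ := h2
        exact hne x
      rcases hProper with h | h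
      · exact h (by ext x; exact (hne x).elim)
      · exact h (by ext x; exact (hLe x).elim)
    obtain ⟨x, _⟩ := hxl
    have hθ := hθsub x (hP x)
    have hset : {y : P | y ∉ P' ∧ subtendedOvoid I P' y = subtendedOvoid I P' x} = Set.univ := by
      ext y
      simp only [Set.mem_ofPred_eq, Set.mem_univ, iff_true]
      refine ⟨hP y, ?_⟩
      ext z
      simp [subtendedOvoid, hP z]
    rw [hset] at hθ
    have h2 : 1 < {l : L | I x l}.ncard := by
      rw [hOrd.2 x, htst]
      have : 0 < s * t' := by positivity
      omega
    rw [Set.one_lt_ncard] at h2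
    obtain ⟨l, hl, m, hm, hlm⟩ := h2
    have h3 : ∃ y, I y m ∧ y ≠ x := by
      have : 1 < {y : P | I y m}.ncard := by rw [hOrd.1]; omega
      obtain ⟨y, hy, h⟩ := Set.exists_ne_of_one_lt_ncard this x
      exact ⟨y, hy, h⟩
    obtain ⟨y, hy, hyx⟩ := h3
    have hyl : y ∉ {x : P | I x l} := fun h => hlm (hGQ.1 x y hyx.symm l m hl h hm hy)
    have h4 : (insert y {x : P | I x l}).ncard = s + 2 := by
      rw [Set.ncard_insert_of_notMem hyl, hOrd.1]
    have h5 := Set.ncard_le_ncard (Set.subset_univ (insert y {x : P | I x l}))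
    rw [h4, hθ] at h5
    have h6 : s + 1 ≤ θ - 1 := by omega
    have h7 : s ≤ t := by rw [htst]; exact Nat.le_mul_of_pos_right _ ht'
    have h8 := Nat.mul_le_mul h6 h7
    nlinarith

theorem nc {α : Type} [Fintype α] (p : α → Prop) [DecidablePred p] :
    {x | p x}.ncard = (Finset.univ.filter p).card := by
  rw [Set.ncard_eq_toFinset_card']
  congr 1
  ext x
  simp

set_option linter.unusedSectionVars false
set_option linter.unusedVariables false

section counting
open Classical Finset

variable [Fintype P] [Fintype L] {I : P → L → Prop} {P' : Set P} {L' : Set L} {s t t' : ℕ}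

theorem Cfg.ptsL2 (C : Cfg I P' L' s t t') (l : L) : (univ.filter (fun x => I x l)).card = s + 1 := by
  rw [← nc]; exact C.ptsL l

theorem Cfg.linesP2 (C : Cfg I P' L' s t t') (x : P) :
    (univ.filter (fun l => I x l)).card = t + 1 := by
  rw [← nc]; exact C.linesP x

theorem Cfg.linesP2' (C : Cfg I P' L' s t t') (x : P) (hx : x ∈ P') :
    (univ.filter (fun l => l ∈ L' ∧ I x l)).card = t' + 1 := by
  rw [← nc]; exact C.linesP' x hx

theorem Cfg.linesE (C : Cfg I P' L' s t t') (x : P) (hx : x ∈ P') :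
    (univ.filter (fun l => l ∉ L' ∧ I x l)).card = t - t' := by
  have h1 := C.linesP2 x
  have h2 := C.linesP2' x hx
  have h3 := card_filter_add_card_filter_not (s := univ.filter (fun l => I x l)) (fun l => l ∈ L')
  rw [filter_filter, filter_filter] at h3
  simp only [and_comm (a := I x _)] at h3
  omega

theorem Cfg.notL (C : Cfg I P' L' s t t') {x l} (hx : x ∉ P') (h : I x l) : l ∉ L' :=
  fun hl => hx (C.full l hl x h)

/-- the subtended ovoid as a finset -/
noncomputable def Ov (I : P → L → Prop) (P' : Set P) (x : P) : Finset P :=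
  univ.filter (fun y => y ∈ P' ∧ Collinear I x y)

theorem mem_Ov {x y : P} : y ∈ Ov I P' x ↔ y ∈ P' ∧ Collinear I x y := by simp [Ov]

theorem Cfg.ov_line (C : Cfg I P' L' s t t') {x y : P} (hx : x ∉ P') (hy : y ∈ Ov I P' x) :
    ∃ l, I x l ∧ I y l := by
  rw [mem_Ov] at hy
  rcases hy.2 with h | h
  · exact (hx (h ▸ hy.1)).elim
  · exact h

theorem Cfg.ov_ncol (C : Cfg I P' L' s t t') {x y y' : P} (hx : x ∉ P') (hy : y ∈ Ov I P' x)
    (hy' : y' ∈ Ov I P' x) (hne : y ≠ y') : ¬ Collinear I y y' := by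
  rw [mem_Ov] at hy hy'
  rintro (h | ⟨l, a, b⟩)
  · exact hne h
  · have := C.tri x l y y' hne hy.2 hy'.2 a b
    exact hx (C.full l (C.two y y' l hy.1 hy'.1 hne a b) x this)

theorem Cfg.ov_card_ge (C : Cfg I P' L' s t t') {x : P} (hx : x ∉ P') :
    t + 1 ≤ (Ov I P' x).card := by
  obtain ⟨M0, hM0⟩ := C.exL
  have hxM0 : ¬ I x M0 := fun h => hx (C.full M0 hM0 x h)
  obtain ⟨z, hzM, hxz⟩ := C.proj x M0 hxM0
  have hzO : z ∈ Ov I P' x := mem_Ov.2 ⟨C.full M0 hM0 z hzM, hxz⟩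
  -- projections onto lines
  have hpr : ∀ N : L, ∃ y, N ∈ L' → I y N ∧ y ∈ Ov I P' x := by
    intro N
    by_cases hN : N ∈ L'
    · obtain ⟨y, h1, h2⟩ := C.proj x N (fun h => hx (C.full N hN x h))
      exact ⟨y, fun _ => ⟨h1, mem_Ov.2 ⟨C.full N hN y h1, h2⟩⟩⟩
    · exact ⟨z, fun h => (hN h).elim⟩
  choose f hf using hpr
  let Mz := (univ.filter (fun m => I m M0)).erase z
  let A : P → Finset P := fun m => (univ.filter (fun y => y ∈ Ov I P' x ∧ y ≠ z ∧ Collinear I y m))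
  have hA : ∀ m ∈ Mz, t' ≤ (A m).card := by
    intro m hm
    simp only [Mz, mem_erase, mem_filter, mem_univ, true_and] at hm
    have hmP := C.full M0 hM0 m hm.2
    have hmO : m ∉ Ov I P' x := fun h =>
      C.ov_ncol hx h hzO hm.1 (Or.inr ⟨M0, hm.2, hzM⟩)
    have hc : ((univ.filter (fun l => l ∈ L' ∧ I m l)).erase M0).card = t' := by
      rw [card_erase_of_mem (by simp [hM0, hm.2]), C.linesP2' m hmP]; omega
    rw [← hc]
    apply card_le_card_of_injOn f
    · intro N hN
      simp only [coe_erase, coe_filter, mem_univ, true_and, Set.mem_sdiff, Set.mem_ofPred_eq, Set.mem_singleton_iff] at hN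
      obtain ⟨⟨hN1, hN2⟩, hN3⟩ := hN
      have := hf N hN1
      simp only [A, coe_filter, mem_univ, true_and, Set.mem_ofPred_eq]
      refine ⟨this.2, ?_, Or.inr ⟨N, this.1, hN2⟩⟩
      intro h
      rw [h] at this
      exact hN3 (C.uniq m z hm.1 N M0 hN2 this.1 hm.2 hzM)
    · intro N hN N' hN' he
      simp only [coe_erase, coe_filter, mem_univ, true_and, Set.mem_sdiff, Set.mem_ofPred_eq, Set.mem_singleton_iff] at hN hN'
      have h1 := hf N hN.1.1
      have h2 := hf N' hN'.1.1
      rw [← he] at h2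
      have hne : f N ≠ m := fun h => hmO (h ▸ h1.2)
      exact C.uniq (f N) m hne N N' h1.1 hN.1.2 h2.1 hN'.1.2
  have hdis : ∀ m ∈ Mz, ∀ m' ∈ Mz, m ≠ m' → Disjoint (A m) (A m') := by
    intro m hm m' hm' hne
    rw [disjoint_left]
    intro y h1 h2
    simp only [Mz, A, mem_erase, mem_filter, mem_univ, true_and] at hm hm' h1 h2
    have := C.tri y M0 m m' hne h1.2.2 h2.2.2 hm.2 hm'.2
    exact C.ov_ncol hx h1.1 hzO h1.2.1 (Or.inr ⟨M0, this, hzM⟩)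
  have hsub : Mz.biUnion A ⊆ (Ov I P' x).erase z := by
    intro y hy
    simp only [mem_biUnion, A, mem_filter, mem_univ, true_and] at hy
    obtain ⟨m, _, h1, h2, _⟩ := hy
    exact mem_erase.2 ⟨h2, h1⟩
  have h1 := card_le_card hsub
  rw [card_biUnion hdis, card_erase_of_mem hzO] at h1
  have h2 := Finset.card_nsmul_le_sum Mz _ _ hA
  have h3 : Mz.card = s := by
    simp only [Mz]
    rw [card_erase_of_mem (by simp [hzM]), C.ptsL2]; omega
  rw [h3, smul_eq_mul, ← C.ht] at h2
  have : 0 < (Ov I P' x).card := card_pos.2 ⟨z, hzO⟩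
  omega

theorem Cfg.ov_line_inj (C : Cfg I P' L' s t t') {l : L} (hl : l ∉ L') {y y' : P}
    (hy : y ∈ P') (hy' : y' ∈ P') (h : I y l) (h' : I y' l) : y = y' := by
  by_contra hne
  exact hl (C.two y y' l hy hy' hne h h')

theorem Cfg.ov_all (C : Cfg I P' L' s t t') {x : P} (hx : x ∉ P') :
    (Ov I P' x).card = t + 1 ∧ ∀ l, I x l → ∃ y ∈ P', I y l := by
  have hc : ∀ y : P, ∃ l, y ∈ Ov I P' x → I x l ∧ I y l := by
    intro y
    by_cases h : y ∈ Ov I P' x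
    · obtain ⟨l, hl⟩ := C.ov_line hx h
      exact ⟨l, fun _ => hl⟩
    · obtain ⟨l, _⟩ := C.exL
      exact ⟨l, fun h' => (h h').elim⟩
  choose f hf using hc
  have hmaps : Set.MapsTo f (Ov I P' x : Finset P) (univ.filter (fun l => I x l) : Finset L) := by
    intro y hy
    simpa using (hf y hy).1
  have hinj : Set.InjOn f (Ov I P' x : Finset P) := by
    intro y hy y' hy' he
    have h1 := hf y hy
    have h2 := hf y' hy'
    rw [← he] at h2
    exact C.ov_line_inj (C.notL hx h1.1) (mem_Ov.1 hy).1 (mem_Ov.1 hy').1 h1.2 h2.2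
  have hge := C.ov_card_ge hx
  have hle := card_le_card_of_injOn f hmaps hinj
  rw [C.linesP2] at hle
  refine ⟨by omega, ?_⟩
  intro l hl
  have := surjOn_of_injOn_of_card_le f hmaps hinj (by rw [C.linesP2]; exact hge)
  obtain ⟨y, hy, rfl⟩ := this (show l ∈ ((univ.filter (fun l => I x l) : Finset L) : Set L) by simpa using hl)
  exact ⟨y, (mem_Ov.1 hy).1, (hf y hy).2⟩

theorem Cfg.tang (C : Cfg I P' L' s t t') {l : L} (hl : l ∉ L') : ∃ y ∈ P', I y l := by
  by_contra hne
  push Not at hne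
  have h : (univ.filter (fun x => I x l)).Nonempty := by
    rw [← card_pos, C.ptsL2]; omega
  obtain ⟨x, hx⟩ := h
  simp only [mem_filter, mem_univ, true_and] at hx
  obtain ⟨y, h1, h2⟩ := (C.ov_all (fun h => hne x h hx)).2 l hx
  exact hne y h1 h2

theorem Cfg.ext_on (C : Cfg I P' L' s t t') {l : L} (hl : l ∉ L') :
    (univ.filter (fun z => z ∉ P' ∧ I z l)).card = s := by
  obtain ⟨w, hw, hwl⟩ := C.tang hl
  have : univ.filter (fun z => z ∉ P' ∧ I z l) = (univ.filter (fun z => I z l)).erase w := by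
    ext z
    simp only [mem_filter, mem_univ, true_and, mem_erase]
    constructor
    · rintro ⟨h1, h2⟩
      exact ⟨fun h => h1 (h ▸ hw), h2⟩
    · rintro ⟨h1, h2⟩
      exact ⟨fun h => h1 (C.ov_line_inj hl h hw h2 hwl), h2⟩
  rw [this, card_erase_of_mem (by simp [hwl]), C.ptsL2]; omega

theorem Cfg.tri' (C : Cfg I P' L' s t t') {x : P} {l : L} (h : ¬ I x l) {y y' : P}
    (h1 : Collinear I x y) (h2 : Collinear I x y') (hy : I y l) (hy' : I y' l) : y = y' := by
  by_contra hne
  exact h (C.tri x l y y' hne h1 h2 hy hy')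

theorem Cfg.col_line (C : Cfg I P' L' s t t') {x y : P} (hne : x ≠ y) (h : Collinear I x y) :
    ∃ l, I x l ∧ I y l := h.resolve_left hne

/-- N1 -/
theorem Cfg.cnt1 (C : Cfg I P' L' s t t') {y : P} (hy : y ∈ P') :
    (univ.filter (fun z => z ∉ P' ∧ Collinear I y z)).card = (t - t') * s := by
  have : univ.filter (fun z => z ∉ P' ∧ Collinear I y z) =
      (univ.filter (fun l => l ∉ L' ∧ I y l)).biUnion
        (fun l => univ.filter (fun z => z ∉ P' ∧ I z l)) := by
    ext z
    simp only [mem_filter, mem_univ, true_and, mem_biUnion]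
    constructor
    · rintro ⟨h1, h2⟩
      obtain ⟨l, h3, h4⟩ := C.col_line (x := y) (y := z) (fun h => h1 (h ▸ hy)) h2
      exact ⟨l, ⟨C.notL h1 h4, h3⟩, h1, h4⟩
    · rintro ⟨l, ⟨h1, h2⟩, h3, h4⟩
      exact ⟨h3, Or.inr ⟨l, h2, h4⟩⟩
  rw [this, card_biUnion, sum_const_nat (m := s), C.linesE y hy]
  · intro l hl
    exact C.ext_on (by simpa using (mem_filter.1 hl).2.1)
  · intro l hl m hm hne
    rw [Function.onFun, disjoint_left]
    intro z h1 h2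
    simp only [mem_coe, mem_filter, mem_univ, true_and] at hl hm h1 h2
    exact hne (C.uniq y z (fun h => h1.1 (h ▸ hy)) l m hl.2 h1.2 hm.2 h2.2)

/-- N3 -/
theorem Cfg.cnt3 (C : Cfg I P' L' s t t') {x : P} (hx : x ∉ P') :
    (univ.filter (fun z => z ∉ P' ∧ z ≠ x ∧ Collinear I x z)).card = (t + 1) * (s - 1) := by
  have : univ.filter (fun z => z ∉ P' ∧ z ≠ x ∧ Collinear I x z) =
      (univ.filter (fun l => I x l)).biUnion
        (fun l => (univ.filter (fun z => z ∉ P' ∧ I z l)).erase x) := by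
    ext z
    simp only [mem_filter, mem_univ, true_and, mem_biUnion, mem_erase]
    constructor
    · rintro ⟨h1, h0, h2⟩
      obtain ⟨l, h3, h4⟩ := C.col_line h0.symm h2
      exact ⟨l, h3, h0, h1, h4⟩
    · rintro ⟨l, h1, h2, h3, h4⟩
      exact ⟨h3, h2, Or.inr ⟨l, h1, h4⟩⟩
  rw [this, card_biUnion, sum_const_nat (m := s - 1), C.linesP2]
  · intro l hl
    simp only [mem_coe, mem_filter, mem_univ, true_and] at hl
    rw [card_erase_of_mem (by simp [hl, hx]), C.ext_on (C.notL hx hl)]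
  · intro l hl m hm hne
    rw [Function.onFun, disjoint_left]
    intro z h1 h2
    simp only [mem_coe, mem_filter, mem_univ, true_and, mem_erase] at hl hm h1 h2
    exact hne (C.uniq x z h1.1.symm l m hl h1.2.2 hm h2.2.2)

/-- N4 -/
theorem Cfg.cnt4 (C : Cfg I P' L' s t t') :
    (univ.filter (fun z => z ∉ P')).card = (s + 1) * ((t - t') * s) := by
  obtain ⟨M, hM⟩ := C.exL
  have : univ.filter (fun z => z ∉ P') =
      (univ.filter (fun y => I y M)).biUnion
        (fun y => univ.filter (fun z => z ∉ P' ∧ Collinear I y z)) := by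
    ext z
    simp only [mem_filter, mem_univ, true_and, mem_biUnion]
    constructor
    · intro h
      obtain ⟨y, h1, h2⟩ := C.proj z M (fun h' => h (C.full M hM z h'))
      exact ⟨y, h1, h, col_symm h2⟩
    · rintro ⟨y, _, h, _⟩
      exact h
  rw [this, card_biUnion, sum_const_nat (m := (t - t') * s), C.ptsL2]
  · intro y hy
    exact C.cnt1 (C.full M hM y (by simpa using hy))
  · intro y hy y' hy' hne
    rw [Function.onFun, disjoint_left]
    intro z h1 h2
    simp only [mem_coe, mem_filter, mem_univ, true_and] at hy hy' h1 h2
    exact hne (C.tri' (fun h' => h1.1 (C.full M hM z h')) (col_symm h1.2) (col_symm h2.2) hy hy')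

/-- N2, general form -/
theorem Cfg.cnt2 (C : Cfg I P' L' s t t') {x y : P} (hxy : ¬ Collinear I x y) (p : P → Prop)
    (q : L → Prop) (hpq : ∀ z l, I x l → I z l → Collinear I y z → (p z ↔ q l)) :
    (univ.filter (fun z => p z ∧ Collinear I x z ∧ Collinear I y z)).card =
      (univ.filter (fun l => q l ∧ I x l)).card := by
  have hnl : ∀ l, I x l → ¬ I y l := fun l h h' => hxy (Or.inr ⟨l, h, h'⟩)
  have hc : ∀ l : L, ∃ z, I x l → I z l ∧ Collinear I y z := by
    intro l
    by_cases h : I x l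
    · obtain ⟨z, hz⟩ := C.proj y l (hnl l h)
      exact ⟨z, fun _ => hz⟩
    · exact ⟨x, fun h' => (h h').elim⟩
  choose f hf using hc
  have : univ.filter (fun z => p z ∧ Collinear I x z ∧ Collinear I y z) =
      (univ.filter (fun l => q l ∧ I x l)).image f := by
    ext z
    simp only [mem_filter, mem_univ, true_and, mem_image]
    constructor
    · rintro ⟨h1, h2, h3⟩
      have hne : x ≠ z := by
        rintro rfl
        exact hxy (col_symm h3)
      obtain ⟨l, h4, h5⟩ := C.col_line hne h2
      exact ⟨l, ⟨(hpq z l h4 h5 h3).1 h1, h4⟩, C.tri' (hnl l h4) (hf l h4).2 h3 (hf l h4).1 h5⟩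
    · rintro ⟨l, ⟨h1, h2⟩, rfl⟩
      have := hf l h2
      exact ⟨(hpq _ l h2 this.1 this.2).2 h1, Or.inr ⟨l, h2, this.1⟩, this.2⟩
  rw [this, card_image_of_injOn]
  intro l hl m hm he
  simp only [coe_filter, mem_univ, true_and, Set.mem_ofPred_eq] at hl hm
  have h1 := hf l hl.2
  have h2 := hf m hm.2
  rw [← he] at h2
  have hne : x ≠ f l := by
    intro h
    rw [← h] at h1
    exact hxy (col_symm h1.2)
  exact C.uniq x (f l) hne l m hl.2 h1.1 hm.2 h2.1

theorem Cfg.cnt2a (C : Cfg I P' L' s t t') {x y : P} (hxy : ¬ Collinear I x y) :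
    (univ.filter (fun z => Collinear I x z ∧ Collinear I y z)).card = t + 1 := by
  have := C.cnt2 hxy (fun _ => True) (fun _ => True) (by simp)
  simpa [C.linesP2] using this

theorem Cfg.cnt2b (C : Cfg I P' L' s t t') {x y : P} (hxy : ¬ Collinear I x y) (hx : x ∈ P')
    (hy : y ∈ P') :
    (univ.filter (fun z => z ∉ P' ∧ Collinear I x z ∧ Collinear I y z)).card = t - t' := by
  have key := C.cnt2 hxy (fun z => z ∉ P') (fun l => l ∉ L') ?_
  · rw [← C.linesE x hx]
    convert key
  intro z l h1 h2 h3
  constructor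
  · intro h; exact C.notL h h2
  · intro h h'
    exact hxy (by rw [C.ov_line_inj h hx h' h1 h2]; exact col_symm h3)

end counting

section key
open Classical Finset

variable [Fintype P] [Fintype L] {I : P → L → Prop} {P' : Set P} {L' : Set L} {s t t' : ℕ}

theorem Cfg.inter_line (C : Cfg I P' L' s t t') {x y w : P} {l : L} (hx : x ∉ P') (hy : y ∉ P')
    (hne : x ≠ y) (hxl : I x l) (hyl : I y l) (hw : w ∈ P') (hwl : I w l) :
    Ov I P' x ∩ Ov I P' y = {w} := by
  ext v
  simp only [mem_inter, mem_Ov, mem_singleton]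
  constructor
  · rintro ⟨⟨h1, h2⟩, _, h3⟩
    have := C.tri v l x y hne (col_symm h2) (col_symm h3) hxl hyl
    exact C.ov_line_inj (C.notL hx hxl) h1 hw this hwl
  · rintro rfl
    exact ⟨⟨hw, Or.inr ⟨l, hxl, hwl⟩⟩, hw, Or.inr ⟨l, hyl, hwl⟩⟩

theorem Cfg.t_pos (C : Cfg I P' L' s t t') : 2 ≤ t := by
  rw [C.ht]; have := C.hs; have := C.ht'; nlinarith

theorem Cfg.inter_col (C : Cfg I P' L' s t t') {x y : P} (hx : x ∉ P') (hy : y ∉ P')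
    (hne : x ≠ y) (h : Collinear I x y) : (Ov I P' x ∩ Ov I P' y).card = 1 := by
  obtain ⟨l, h1, h2⟩ := C.col_line hne h
  obtain ⟨w, hw, hwl⟩ := C.tang (C.notL hx h1)
  rw [C.inter_line hx hy hne h1 h2 hw hwl, card_singleton]

theorem Cfg.fb_ncol (C : Cfg I P' L' s t t') {x y : P} (hx : x ∉ P') (hy : y ∉ P')
    (hne : x ≠ y) (hO : Ov I P' x = Ov I P' y) : ¬ Collinear I x y := by
  intro h
  have h1 := C.inter_col hx hy hne h
  rw [hO, inter_self, (C.ov_all hy).1] at h1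
  have := C.t_pos
  omega

theorem Cfg.fb_disj (C : Cfg I P' L' s t t') {x y z : P} (hx : x ∉ P') (hy : y ∉ P')
    (hO : Ov I P' x = Ov I P' y) (hz : z ∉ P') (h1 : Collinear I x z)
    (h2 : Collinear I y z) : x = y := by
  by_contra hne
  have hnc := C.fb_ncol hx hy hne hO
  have hc := C.cnt2a hnc
  have hsub : Ov I P' x ⊆ univ.filter (fun z => Collinear I x z ∧ Collinear I y z) := by
    intro v hv
    have hv' := hO ▸ hv
    rw [mem_Ov] at hv hv'
    simp [hv.2, hv'.2]
  have := eq_of_subset_of_card_le hsub (by rw [hc, (C.ov_all hx).1])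
  have hzm : z ∈ Ov I P' x := by rw [this]; simp [h1, h2]
  exact hz (mem_Ov.1 hzm).1

/-- the fibre of subtending points -/
noncomputable def Fb (I : P → L → Prop) (P' : Set P) (x : P) : Finset P :=
  univ.filter (fun y => y ∉ P' ∧ Ov I P' y = Ov I P' x)

theorem mem_Fb {x y : P} : y ∈ Fb I P' x ↔ y ∉ P' ∧ Ov I P' y = Ov I P' x := by simp [Fb]

theorem Cfg.sumY (C : Cfg I P' L' s t t') {x : P} (hx : x ∉ P') :
    ∑ z ∈ univ.filter (fun z => z ∉ P'),
      (((Ov I P' x).filter (fun y => Collinear I y z)).card : ℤ) = (t + 1) * ((t - t' : ℕ) * s) := by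
  simp only [card_filter, Nat.cast_sum]
  rw [sum_comm]
  have : ∀ y ∈ Ov I P' x, ∑ z ∈ univ.filter (fun z => z ∉ P'),
      ((if Collinear I y z then 1 else 0 : ℕ) : ℤ) = ((t - t' : ℕ) * s : ℤ) := by
    intro y hy
    rw [← Nat.cast_sum, ← card_filter, filter_filter]
    have := C.cnt1 (mem_Ov.1 hy).1
    rw [this]; push_cast; rfl
  rw [sum_congr rfl this, sum_const, (C.ov_all hx).1]
  simp

theorem Cfg.sumY2 (C : Cfg I P' L' s t t') {x : P} (hx : x ∉ P') :
    ∑ z ∈ univ.filter (fun z => z ∉ P'),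
      (((Ov I P' x).filter (fun y => Collinear I y z)).card : ℤ) ^ 2 =
       (t + 1) * ((t - t' : ℕ) * s + t * (t - t' : ℕ)) := by
  simp only [card_filter, Nat.cast_sum, pow_two, sum_mul_sum]
  rw [sum_comm]
  have : ∀ y ∈ Ov I P' x, ∑ z ∈ univ.filter (fun z => z ∉ P'), ∑ y' ∈ Ov I P' x,
      ((if Collinear I y z then 1 else 0 : ℕ) : ℤ) * ((if Collinear I y' z then 1 else 0 : ℕ) : ℤ)
       = ((t - t' : ℕ) * s + t * (t - t' : ℕ) : ℤ) := by
    intro y hy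
    rw [sum_comm]
    have hN : ∀ y', ∑ z ∈ univ.filter (fun z => z ∉ P'),
      ((if Collinear I y z then 1 else 0 : ℕ) : ℤ) * ((if Collinear I y' z then 1 else 0 : ℕ) : ℤ)
        = ((univ.filter (fun z => z ∉ P' ∧ Collinear I y z ∧ Collinear I y' z)).card : ℤ) := by
      intro y'
      rw [← filter_filter, card_filter, Nat.cast_sum]
      apply sum_congr rfl
      intro z _
      by_cases h1 : Collinear I y z <;> by_cases h2 : Collinear I y' z <;> simp [h1, h2]
    simp only [hN]
    rw [← add_sum_erase _ _ hy]
    congr 1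
    · have := C.cnt1 (mem_Ov.1 hy).1
      simp only [and_self]
      rw [this]; push_cast; rfl
    · have h2 : ∀ y' ∈ (Ov I P' x).erase y,
        ((univ.filter (fun z => z ∉ P' ∧ Collinear I y z ∧ Collinear I y' z)).card : ℤ)
          = ((t - t' : ℕ) : ℤ) := by
        intro y' hy'
        rw [mem_erase] at hy'
        rw [C.cnt2b (C.ov_ncol hx hy hy'.2 hy'.1.symm) (mem_Ov.1 hy).1 (mem_Ov.1 hy'.2).1]
      rw [sum_congr rfl h2, sum_const, card_erase_of_mem hy, (C.ov_all hx).1]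
      simp
  rw [sum_congr rfl this, sum_const, (C.ov_all hx).1]
  simp

theorem ov_filter {x z : P} :
    (Ov I P' x).filter (fun y => Collinear I y z) = Ov I P' x ∩ Ov I P' z := by
  ext y
  simp only [mem_filter, mem_inter, mem_Ov]
  constructor
  · rintro ⟨⟨a, b⟩, c⟩
    exact ⟨⟨a, b⟩, a, col_symm c⟩
  · rintro ⟨⟨a, b⟩, _, c⟩
    exact ⟨⟨a, b⟩, col_symm c⟩

theorem Cfg.key (C : Cfg I P' L' s t t') {θ : ℕ} (hθt : (θ - 1) * t = s ^ 2) (hθ : 1 < θ)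
    {x z : P} (hx : x ∉ P') (hF : (Fb I P' x).card = θ) (hz : z ∉ P')
    (hn : ∀ x' ∈ Fb I P' x, ¬ Collinear I x' z) : (Ov I P' x ∩ Ov I P' z).card = t' + 1 := by
  let f : P → ℤ := fun z => (((Ov I P' x ∩ Ov I P' z).card : ℤ) - (t' + 1)) ^ 2
  have hs := C.hs
  have ht' := C.ht'
  have hu : ((t - t' : ℕ) : ℤ) = t' * (s - 1) := by
    have : t' ≤ t := by rw [C.ht]; nlinarith
    rw [Nat.cast_sub this, C.ht]; push_cast; ring
  have htz : (t : ℤ) = s * t' := by rw [C.ht]; push_cast; ring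
  have hθz : (θ : ℤ) * t' = s + t' := by
    have h1 : ((θ - 1 : ℕ) : ℤ) * t = s ^ 2 := by exact_mod_cast hθt
    rw [Nat.cast_sub hθ.le, htz] at h1
    have hs0 : (s : ℤ) ≠ 0 := by positivity
    apply mul_left_cancel₀ hs0
    push_cast at h1
    linear_combination h1
  have htot : ∑ z ∈ univ.filter (fun z => z ∉ P'), f z =
      (t' * (s - 1)) * (s + t) * (s + t') := by
    have e : ∀ z, f z = (((Ov I P' x).filter (fun y => Collinear I y z)).card : ℤ) ^ 2
        - 2 * (t' + 1) * (((Ov I P' x).filter (fun y => Collinear I y z)).card : ℤ)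
        + (t' + 1) ^ 2 := by
      intro z
      rw [ov_filter]
      simp only [f]
      ring
    simp only [e]
    rw [sum_add_distrib, sum_sub_distrib, ← mul_sum, C.sumY2 hx, C.sumY hx, sum_const, C.cnt4,
      nsmul_eq_mul]
    push_cast
    rw [hu, htz]
    ring
  let B : P → Finset P := fun x' => univ.filter (fun z => z ∉ P' ∧ Collinear I x' z)
  have hdis : Set.PairwiseDisjoint (Fb I P' x : Set P) B := by
    intro a ha b hb hne
    rw [Function.onFun, disjoint_left]
    intro v h1 h2
    simp only [B, mem_filter, mem_univ, true_and] at h1 h2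
    have ha := mem_Fb.1 ha
    have hb := mem_Fb.1 hb
    exact hne (C.fb_disj ha.1 hb.1 (ha.2.trans hb.2.symm) h1.1 h1.2 h2.2)
  have hB : ∀ x' ∈ Fb I P' x, ∑ z ∈ B x', f z =
      (t' * (s - 1)) ^ 2 + (t + 1) * (s - 1) * t' ^ 2 := by
    intro x' hx'
    rw [mem_Fb] at hx'
    have hmem : x' ∈ B x' := mem_filter.2 ⟨mem_univ _, hx'.1, Or.inl rfl⟩
    rw [← add_sum_erase _ _ hmem]
    congr 1
    · simp only [f]
      rw [hx'.2, inter_self, (C.ov_all hx).1]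
      push_cast
      rw [htz]; ring
    · have e : (B x').erase x' = univ.filter (fun z => z ∉ P' ∧ z ≠ x' ∧ Collinear I x' z) := by
        ext v
        simp only [B, mem_erase, mem_filter, mem_univ, true_and]
        tauto
      have e2 : ∀ v ∈ (B x').erase x', f v = t' ^ 2 := by
        intro v hv
        rw [e] at hv
        simp only [mem_filter, mem_univ, true_and] at hv
        simp only [f]
        rw [← hx'.2, C.inter_col hx'.1 hv.1 hv.2.1.symm hv.2.2]
        push_cast
        ring
      rw [sum_congr rfl e2, sum_const, e, C.cnt3 hx'.1, nsmul_eq_mul]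
      push_cast [Nat.cast_sub (show 1 ≤ s by omega)]
      ring
  let T := (Fb I P' x).biUnion B
  have hT : ∑ z ∈ T, f z = (t' * (s - 1)) * (s + t) * (s + t') := by
    rw [sum_biUnion hdis, sum_congr rfl hB, sum_const, hF, nsmul_eq_mul, htz]
    linear_combination (t' : ℤ) * (s - 1) * (s + s * t') * hθz
  have hTs : insert z T ⊆ univ.filter (fun z => z ∉ P') := by
    intro v hv
    simp only [T, B, mem_insert, mem_biUnion, mem_filter, mem_univ, true_and] at hv ⊢
    rcases hv with rfl | ⟨_, _, h, _⟩
    · exact hz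
    · exact h
  have hzT : z ∉ T := by
    simp only [T, B, mem_biUnion, mem_filter, mem_univ, true_and]
    rintro ⟨a, ha, _, h⟩
    exact hn a ha h
  have hle := sum_le_sum_of_subset_of_nonneg hTs (f := f) (fun i _ _ => sq_nonneg _)
  rw [sum_insert hzT, hT, htot] at hle
  have h0 : f z ≤ 0 := by linarith
  have h1 : ((Ov I P' x ∩ Ov I P' z).card : ℤ) - (t' + 1) = 0 := by
    have : f z = 0 := le_antisymm h0 (sq_nonneg _)
    exact pow_eq_zero_iff (two_ne_zero) |>.1 this
  have : ((Ov I P' x ∩ Ov I P' z).card : ℤ) = ((t' + 1 : ℕ) : ℤ) := by push_cast; linarith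
  exact_mod_cast this

end key

section final
open Classical Finset

variable [Fintype P] [Fintype L] {I : P → L → Prop} {P' : Set P} {L' : Set L} {s t t' : ℕ}

theorem sub_eq {x y : P} :
    subtendedOvoid I P' x = subtendedOvoid I P' y ↔ Ov I P' x = Ov I P' y := by
  have h : ∀ x, ((Ov I P' x : Finset P) : Set P) = subtendedOvoid I P' x := by
    intro x; ext y; simp [Ov, subtendedOvoid]
  rw [← h x, ← h y, Finset.coe_inj]

/-- all hypotheses -/
structure Cfg2 (I : P → L → Prop) (P' : Set P) (L' : Set L) (s t t' θ : ℕ) : Prop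
    extends Cfg I P' L' s t t' where
  hθt : (θ - 1) * t = s ^ 2
  hθ : 1 < θ
  hF : ∀ x, x ∉ P' → (Fb I P' x).card = θ

variable {θ : ℕ}

theorem Cfg2.conn (C : Cfg2 I P' L' s t t' θ) {x y : P} (hx : x ∉ P') (hy : y ∉ P')
    (h : (Ov I P' x ∩ Ov I P' y).card = 1) : ∃ y' ∈ Fb I P' y, Collinear I x y' ∧ x ≠ y' := by
  have h1 : ∃ y' ∈ Fb I P' y, Collinear I y' x := by
    by_contra hn
    push Not at hn
    have := C.key C.hθt C.hθ hy (C.hF y hy) hx hn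
    rw [inter_comm] at this
    have := C.ht'
    omega
  obtain ⟨y', h2, h3⟩ := h1
  refine ⟨y', h2, col_symm h3, ?_⟩
  rintro rfl
  rw [(mem_Fb.1 h2).2, inter_self, (C.ov_all hy).1] at h
  have := C.t_pos
  omega

theorem Cfg2.ros (C : Cfg2 I P' L' s t t' θ) {x y w : P} {l m : L} (hx : x ∉ P') (hy : y ∉ P')
    (hO : Ov I P' x = Ov I P' y) (hw : w ∈ P') (hxl : I x l) (hwl : I w l) (hym : I y m)
    (hwm : I w m) : rosette I P' m ⊆ rosette I P' l := by
  rintro _ ⟨z, hz, hzm, rfl⟩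
  by_cases hzy : z = y
  · subst hzy
    exact ⟨x, hx, hxl, sub_eq.2 hO.symm⟩
  · have h1 := C.inter_line hy hz (Ne.symm hzy) hym hzm hw hwm
    rw [← hO] at h1
    obtain ⟨z', h2, h3, h4⟩ := C.conn hx hz (by rw [h1, card_singleton])
    obtain ⟨hz', hOz⟩ := mem_Fb.1 h2
    obtain ⟨n, h5, h6⟩ := C.col_line h4 h3
    obtain ⟨w', h7, h8⟩ := C.tang (C.notL hx h5)
    have h9 := C.inter_line hx hz' h4 h5 h6 h7 h8
    rw [hOz, h1, singleton_inj] at h9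
    subst h9
    have : n = l := C.uniq x w (fun h => hx (h ▸ hw)) n l h5 h8 hxl hwl
    subst this
    exact ⟨z', hz', h6, sub_eq.2 hOz.symm⟩

theorem Cfg2.ros_eq (C : Cfg2 I P' L' s t t' θ) {x y w : P} {l m : L} (hx : x ∉ P')
    (hy : y ∉ P')
    (hO : Ov I P' x = Ov I P' y) (hw : w ∈ P') (hxl : I x l) (hwl : I w l) (hym : I y m)
    (hwm : I w m) : rosette I P' m = rosette I P' l :=
  Set.Subset.antisymm (C.ros hx hy hO hw hxl hwl hym hwm)
    (C.ros hy hx hO.symm hw hym hwm hxl hwl)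

/-- move the rosette to a line through `x` -/
theorem Cfg2.ros_move (C : Cfg2 I P' L' s t t' θ) {x : P} {m : L} (hx : x ∉ P')
    (h : subtendedOvoid I P' x ∈ rosette I P' m) :
    ∃ l, I x l ∧ rosette I P' m = rosette I P' l := by
  obtain ⟨y, hy, hym, hO⟩ := h
  rw [sub_eq] at hO
  obtain ⟨w, hw, hwm⟩ := C.tang (C.notL hy hym)
  have hwx : w ∈ Ov I P' x := by
    rw [hO]
    exact mem_Ov.2 ⟨hw, Or.inr ⟨m, hym, hwm⟩⟩
  obtain ⟨l, h1, h2⟩ := C.ov_line hx hwx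
  exact ⟨l, h1, C.ros_eq hx hy hO hw h1 h2 hym hwm⟩

theorem Cfg2.ecol (C : Cfg2 I P' L' s t t' θ) {x y : P} (hx : x ∉ P') (hy : y ∉ P') :
    (∃ R : ELine I P' L', subtendedOvoid I P' x ∈ R.1 ∧ subtendedOvoid I P' y ∈ R.1) ↔
      ∃ y' ∈ Fb I P' y, Collinear I x y' := by
  constructor
  · rintro ⟨⟨_, m, hm, rfl⟩, h1, h2⟩
    obtain ⟨l, h3, h4⟩ := C.ros_move hx h1
    simp only [h4] at h2
    obtain ⟨y', h5, h6, h7⟩ := h2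
    exact ⟨y', mem_Fb.2 ⟨h5, (sub_eq.1 h7).symm⟩, Or.inr ⟨l, h3, h6⟩⟩
  · rintro ⟨y', h1, h2⟩
    obtain ⟨h3, h4⟩ := mem_Fb.1 h1
    have : ∃ l, I x l ∧ I y' l := by
      rcases h2 with rfl | h
      · have : (univ.filter (fun l => I x l)).Nonempty := by
          rw [← card_pos, C.linesP2]; omega
        obtain ⟨l, hl⟩ := this
        exact ⟨l, by simpa using hl⟩
      · exact h
    obtain ⟨l, h5, h6⟩ := this
    exact ⟨⟨_, l, C.notL hx h5, rfl⟩, ⟨x, hx, h5, rfl⟩, ⟨y', h3, h6, sub_eq.2 h4.symm⟩⟩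

theorem ecard (p : Set P → Prop) (A : Finset P) (hA : ∀ z ∈ A, z ∉ P')
    (hp : ∀ z, z ∉ P' → p (subtendedOvoid I P' z) → ∃ z' ∈ A, Ov I P' z' = Ov I P' z)
    (hp' : ∀ z ∈ A, p (subtendedOvoid I P' z))
    (hinj : ∀ z ∈ A, ∀ z' ∈ A, Ov I P' z = Ov I P' z' → z = z') :
    {O : EPoint I P' | p O.1}.ncard = A.card := by
  rw [← Set.ncard_image_of_injective _ Subtype.val_injective, ← Set.ncard_coe_finset A]
  have : (Subtype.val '' {O : EPoint I P' | p O.1}) = subtendedOvoid I P' '' (A : Set P) := by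
    ext S
    constructor
    · rintro ⟨⟨_, z, hz, rfl⟩, h, rfl⟩
      obtain ⟨z', h1, h2⟩ := hp z hz h
      exact ⟨z', h1, sub_eq.2 h2⟩
    · rintro ⟨z, hz, rfl⟩
      exact ⟨⟨_, z, hA z hz, rfl⟩, hp' z hz, rfl⟩
  rw [this, Set.ncard_image_of_injOn]
  intro z hz z' hz' he
  exact hinj z hz z' hz' (sub_eq.1 he)

theorem Cfg2.inj_line (C : Cfg2 I P' L' s t t' θ) {z z' : P} {l : L} (hz : z ∉ P') (hz' : z' ∉ P')
    (h : I z l) (h' : I z' l) (hO : Ov I P' z = Ov I P' z') : z = z' := by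
  by_contra hne
  exact C.fb_ncol hz hz' hne hO (Or.inr ⟨l, h, h'⟩)

theorem Cfg2.p1 (C : Cfg2 I P' L' s t t' θ) (R : ELine I P' L') :
    {O : EPoint I P' | O.1 ∈ R.1}.ncard = s := by
  obtain ⟨_, l, hl, rfl⟩ := R
  rw [← C.ext_on hl]
  apply ecard (p := fun S => S ∈ rosette I P' l)
  · intro z hz; simp only [mem_filter, mem_univ, true_and] at hz; exact hz.1
  · rintro z hz ⟨z', h1, h2, h3⟩
    exact ⟨z', by simp [h1, h2], (sub_eq.1 h3).symm⟩
  · intro z hz; simp only [mem_filter, mem_univ, true_and] at hz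
    exact ⟨z, hz.1, hz.2, rfl⟩
  · intro z hz z' hz' h
    simp only [mem_filter, mem_univ, true_and] at hz hz'
    exact C.inj_line hz.1 hz'.1 hz.2 hz'.2 h

theorem Cfg2.p2 (C : Cfg2 I P' L' s t t' θ) (O : EPoint I P') :
    {R : ELine I P' L' | O.1 ∈ R.1}.ncard = t + 1 := by
  obtain ⟨_, x, hx, rfl⟩ := O
  rw [← C.linesP2 x, ← Set.ncard_image_of_injective _ Subtype.val_injective,
    ← Set.ncard_coe_finset]
  have : (Subtype.val '' {R : ELine I P' L' | subtendedOvoid I P' x ∈ R.1}) =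
      rosette I P' '' ((univ.filter (fun l => I x l) : Finset L) : Set L) := by
    ext S
    constructor
    · rintro ⟨⟨_, m, hm, rfl⟩, h, rfl⟩
      obtain ⟨l, h1, h2⟩ := C.ros_move hx h
      exact ⟨l, by simpa using h1, h2.symm⟩
    · rintro ⟨l, hl, rfl⟩
      have hl : I x l := by simpa using hl
      exact ⟨⟨_, l, C.notL hx hl, rfl⟩, ⟨x, hx, hl, rfl⟩, rfl⟩
  simp only at this ⊢
  rw [this, Set.ncard_image_of_injOn]
  intro l hl m hm he
  have hl : I x l := by simpa using hl
  have hm : I x m := by simpa using hm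
  obtain ⟨w, hw, hwl⟩ := C.tang (C.notL hx hl)
  obtain ⟨v, hv, hvm⟩ := C.tang (C.notL hx hm)
  have hc := C.ext_on (C.notL hx hl)
  obtain ⟨z, hz, hzx⟩ := exists_mem_ne (s := univ.filter (fun z => z ∉ P' ∧ I z l))
    (by rw [hc]; exact C.hs) x
  simp only [mem_filter, mem_univ, true_and] at hz
  have h1 : subtendedOvoid I P' z ∈ rosette I P' m := by
    rw [← he]; exact ⟨z, hz.1, hz.2, rfl⟩
  obtain ⟨z', h2, h3, h4⟩ := h1
  rw [sub_eq] at h4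
  have hz'x : x ≠ z' := by
    rintro rfl
    exact hzx (C.inj_line hz.1 hx hz.2 hl h4)
  have e1 := C.inter_line hx hz.1 hzx.symm hl hz.2 hw hwl
  have e2 := C.inter_line hx h2 hz'x hm h3 hv hvm
  rw [← h4, e1, singleton_inj] at e2
  subst e2
  exact C.uniq x w (fun h => hx (h ▸ hw)) l m hl hwl hm hvm

theorem Cfg2.p3 (C : Cfg2 I P' L' s t t' θ) (O O' : EPoint I P') (hne : O ≠ O')
    (R R' : ELine I P' L') (h1 : O.1 ∈ R.1) (h2 : O'.1 ∈ R.1) (h3 : O.1 ∈ R'.1)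
    (h4 : O'.1 ∈ R'.1) : R = R' := by
  obtain ⟨O, hO⟩ := O
  obtain ⟨O', hO'⟩ := O'
  obtain ⟨_, l, hl, rfl⟩ := R
  obtain ⟨_, m, hm, rfl⟩ := R'
  obtain ⟨x, a1, a2, rfl⟩ := h1
  obtain ⟨z, b1, b2, rfl⟩ := h2
  obtain ⟨x', c1, c2, c3⟩ := h3
  obtain ⟨z', d1, d2, d3⟩ := h4
  have hne' : subtendedOvoid I P' x ≠ subtendedOvoid I P' z := fun h => hne (Subtype.ext h)
  simp only [sub_eq] at c3 d3
  rw [Ne, sub_eq] at hne'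
  obtain ⟨w, hw, hwl⟩ := C.tang hl
  obtain ⟨v, hv, hvm⟩ := C.tang hm
  have e1 := C.inter_line a1 b1 (fun h => hne' (by rw [h])) a2 b2 hw hwl
  have e2 := C.inter_line c1 d1 (fun h => hne' (by rw [c3, d3, h])) c2 d2 hv hvm
  rw [← c3, ← d3, e1, singleton_inj] at e2
  subst e2
  exact Subtype.ext (C.ros_eq c1 a1 c3.symm hw c2 hvm a2 hwl)

theorem ecol_symm {O O' : EPoint I P'} : ECol I P' L' O O' ↔ 
    ∃ R : ELine I P' L', O'.1 ∈ R.1 ∧ O.1 ∈ R.1 := by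
  constructor
  · rintro ⟨R, a, b⟩; exact ⟨R, b, a⟩
  · rintro ⟨R, a, b⟩; exact ⟨R, b, a⟩

theorem Cfg2.p4 (C : Cfg2 I P' L' s t t' θ) (p : EPoint I P') (R : ELine I P' L')
    (hpR : p.1 ∉ R.1) :
      {O : EPoint I P' | O.1 ∈ R.1 ∧ ECol I P' L' p O}.ncard = 0 ∨
      {O : EPoint I P' | O.1 ∈ R.1 ∧ ECol I P' L' p O}.ncard = θ := by
  obtain ⟨_, x, hx, rfl⟩ := p
  obtain ⟨_, l, hl, rfl⟩ := R
  obtain ⟨w, hw, hwl⟩ := C.tang hl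
  have hxl : ∀ x' ∈ Fb I P' x, ¬ I x' l := by
    intro x' h h'
    rw [mem_Fb] at h
    exact hpR ⟨x', h.1, h', sub_eq.2 h.2.symm⟩
  simp only [ecol_symm]
  let A : Finset P := univ.filter (fun z => z ∉ P' ∧ I z l ∧ ∃ x' ∈ Fb I P' x, Collinear I z x')
  have hA : {O : EPoint I P' | O.1 ∈ rosette I P' l ∧ ∃ R : ELine I P' L', O.1 ∈ R.1 ∧
      subtendedOvoid I P' x ∈ R.1}.ncard = A.card := by
    apply ecard (p := fun S => S ∈ rosette I P' l ∧ ∃ R : ELine I P' L', S ∈ R.1 ∧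
      subtendedOvoid I P' x ∈ R.1)
    · intro z hz; simp only [A, mem_filter, mem_univ, true_and] at hz; exact hz.1
    · rintro z hz ⟨⟨z', h1, h2, h3⟩, h4⟩
      rw [h3] at h4
      exact ⟨z', mem_filter.2 ⟨mem_univ _, h1, h2, (C.ecol h1 hx).1 h4⟩, (sub_eq.1 h3).symm⟩
    · intro z hz
      simp only [A, mem_filter, mem_univ, true_and] at hz
      exact ⟨⟨z, hz.1, hz.2.1, rfl⟩, (C.ecol hz.1 hx).2 hz.2.2⟩
    · intro z hz z' hz' h
      simp only [A, mem_filter, mem_univ, true_and] at hz hz'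
      exact C.inj_line hz.1 hz'.1 hz.2.1 hz'.2.1 h
  rw [hA]
  by_cases hwx : w ∈ Ov I P' x
  · left
    rw [card_eq_zero, eq_empty_iff_forall_notMem]
    intro z hz
    simp only [A, mem_filter, mem_univ, true_and] at hz
    obtain ⟨h1, h2, x', h3, h4⟩ := hz
    have h5 := mem_Fb.1 h3
    rw [← h5.2] at hwx
    have := C.tri' (hxl x' h3) (mem_Ov.1 hwx).2 (col_symm h4) hwl h2
    exact h1 (this ▸ hw)
  · right
    have hg : ∀ x', ∃ z, x' ∈ Fb I P' x → I z l ∧ Collinear I x' z := by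
      intro x'
      by_cases h : x' ∈ Fb I P' x
      · obtain ⟨z, hz⟩ := C.proj x' l (hxl x' h)
        exact ⟨z, fun _ => hz⟩
      · exact ⟨x, fun h' => (h h').elim⟩
    choose g hg using hg
    have hgP : ∀ x' ∈ Fb I P' x, g x' ∉ P' := by
      intro x' h hP
      have h1 := hg x' h
      have h2 := C.ov_line_inj hl hP hw h1.1 hwl
      apply hwx
      rw [← (mem_Fb.1 h).2]
      exact mem_Ov.2 ⟨hw, h2 ▸ h1.2⟩
    have : A = (Fb I P' x).image g := by
      ext z
      simp only [A, mem_filter, mem_univ, true_and, mem_image]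
      constructor
      · rintro ⟨h1, h2, x', h3, h4⟩
        exact ⟨x', h3, C.tri' (hxl x' h3) (hg x' h3).2 (col_symm h4) (hg x' h3).1 h2⟩
      · rintro ⟨x', h3, rfl⟩
        exact ⟨hgP x' h3, (hg x' h3).1, x', h3, col_symm (hg x' h3).2⟩
    rw [this, card_image_of_injOn, C.hF x hx]
    intro a ha b hb he
    have h1 := mem_Fb.1 ha
    have h2 := mem_Fb.1 hb
    have h3 := (hg b hb).2
    rw [← he] at h3
    exact C.fb_disj h1.1 h2.1 (h1.2.trans h2.2.symm) (hgP a ha) (hg a ha).2 h3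

theorem Cfg2.p5 (C : Cfg2 I P' L' s t t' θ) (p q : EPoint I P') (hpq : ¬ ECol I P' L' p q) :
    {r : EPoint I P' | ECol I P' L' p r ∧ ECol I P' L' q r}.ncard = θ * (t - t') := by
  obtain ⟨_, x, hx, rfl⟩ := p
  obtain ⟨_, y, hy, rfl⟩ := q
  have hn : ∀ y' ∈ Fb I P' y, ¬ Collinear I x y' := by
    intro y' h h'
    exact hpq ((C.ecol hx hy).2 ⟨y', h, h'⟩)
  let B : P → Finset P := fun y' => univ.filter (fun z => z ∉ P' ∧ Collinear I x z ∧ Collinear I y' z)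
  have hB : ∀ y' ∈ Fb I P' y, (B y').card = t - t' := by
    intro y' h
    have h1 := C.cnt2a (hn y' h)
    have h2 := card_filter_add_card_filter_not
      (s := univ.filter (fun z => Collinear I x z ∧ Collinear I y' z)) (fun z => z ∈ P')
    have h3 := C.key C.hθt C.hθ hy (C.hF y hy) hx (fun x' h h' => hn x' h (col_symm h'))
    rw [← (mem_Fb.1 h).2] at h3
    have e1 : (univ.filter (fun z => Collinear I x z ∧ Collinear I y' z)).filter (fun z => z ∈ P')
        = Ov I P' y' ∩ Ov I P' x := by
      ext z; simp only [mem_filter, mem_univ, true_and, mem_inter, mem_Ov]; tauto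
    have e2 : (univ.filter (fun z => Collinear I x z ∧ Collinear I y' z)).filter (fun z => ¬ z ∈ P')
        = B y' := by
      ext z; simp only [B, mem_filter, mem_univ, true_and]; tauto
    rw [e1, e2] at h2
    omega
  have hc : ((Fb I P' y).biUnion B).card = θ * (t - t') := by
    rw [card_biUnion, sum_const_nat hB, C.hF y hy]
    intro a ha b hb hne
    rw [Function.onFun, disjoint_left]
    intro z h1 h2
    simp only [B, mem_filter, mem_univ, true_and] at h1 h2
    have ha := mem_Fb.1 ha
    have hb := mem_Fb.1 hb
    exact hne (C.fb_disj ha.1 hb.1 (ha.2.trans hb.2.symm) h1.1 h1.2.2 h2.2.2)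
  rw [← hc]
  have hmem : ∀ z, z ∈ (Fb I P' y).biUnion B ↔ z ∉ P' ∧ Collinear I x z ∧
      ∃ y' ∈ Fb I P' y, Collinear I z y' := by
    intro z
    simp only [B, mem_biUnion, mem_filter, mem_univ, true_and]
    constructor
    · rintro ⟨y', a, b, c, d⟩; exact ⟨b, c, y', a, col_symm d⟩
    · rintro ⟨b, c, y', a, d⟩; exact ⟨y', a, b, c, col_symm d⟩
  have hsym : ∀ S T : Set P, (∃ R : ELine I P' L', S ∈ R.1 ∧ T ∈ R.1) ↔
      (∃ R : ELine I P' L', T ∈ R.1 ∧ S ∈ R.1) :=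
    fun S T => ⟨fun ⟨R, a, b⟩ => ⟨R, b, a⟩, fun ⟨R, a, b⟩ => ⟨R, b, a⟩⟩
  apply ecard (p := fun S => (∃ R : ELine I P' L', subtendedOvoid I P' x ∈ R.1 ∧ S ∈ R.1) ∧
    (∃ R : ELine I P' L', subtendedOvoid I P' y ∈ R.1 ∧ S ∈ R.1))
  · intro z hz; exact ((hmem z).1 hz).1
  · rintro z hz ⟨h1, h2⟩
    obtain ⟨z', h3, h4⟩ := (C.ecol hx hz).1 h1
    have h5 := mem_Fb.1 h3
    rw [hsym, ← sub_eq.2 h5.2] at h2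
    exact ⟨z', (hmem z').2 ⟨h5.1, h4, (C.ecol h5.1 hy).1 h2⟩, h5.2⟩
  · intro z hz
    obtain ⟨h1, h2, h3⟩ := (hmem z).1 hz
    refine ⟨(C.ecol hx h1).2 ⟨z, mem_Fb.2 ⟨h1, rfl⟩, h2⟩, ?_⟩
    rw [hsym]
    exact (C.ecol h1 hy).2 h3
  · intro z hz z' hz' h
    obtain ⟨h1, h2, h3⟩ := (hmem z).1 hz
    obtain ⟨h1', h2', h3'⟩ := (hmem z').1 hz'
    exact C.fb_disj h1 h1' h hx (col_symm h2) (col_symm h2')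

end final

/-- `E` is a semipartial geometry with parameters
`s* = s − 1`, `t* = t`, `α* = θ`, `μ* = θ(t − t')`. -/
theorem statement14 {P L : Type} [Finite P] [Finite L]
    (I : P → L → Prop) (P' : Set P) (L' : Set L) (s t t' θ : ℕ)
    (hGQ : IsGQ I) (hOrd : HasOrder I s t) (hs : 2 ≤ s)
    (hSubGQ : IsGQ (SubIncid I P' L'))
    (hSubOrd : HasOrder (SubIncid I P' L') s t')
    (hFull : IsFull I P' L')
    (hProper : P' ≠ Set.univ ∨ L' ≠ Set.univ)
    (ht' : t' ≠ 1) (htst : t = s * t') (hθt : (θ - 1) * t = s ^ 2) (hθ : 1 < θ)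
    (hθsub : AllThetaSubtended I P' θ) :
    (∀ R : ELine I P' L', {O : EPoint I P' | O.1 ∈ R.1}.ncard = s) ∧
    (∀ O : EPoint I P', {R : ELine I P' L' | O.1 ∈ R.1}.ncard = t + 1) ∧
    (∀ O O' : EPoint I P', O ≠ O' → ∀ R R' : ELine I P' L',
      O.1 ∈ R.1 → O'.1 ∈ R.1 → O.1 ∈ R'.1 → O'.1 ∈ R'.1 → R = R') ∧
    (∀ (p : EPoint I P') (R : ELine I P' L'), p.1 ∉ R.1 →
      {O : EPoint I P' | O.1 ∈ R.1 ∧ ECol I P' L' p O}.ncard = 0 ∨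
      {O : EPoint I P' | O.1 ∈ R.1 ∧ ECol I P' L' p O}.ncard = θ) ∧
    (∀ p q : EPoint I P', ¬ ECol I P' L' p q →
      {r : EPoint I P' | ECol I P' L' p r ∧ ECol I P' L' q r}.ncard = θ * (t - t')) := by
  have := Fintype.ofFinite P
  have := Fintype.ofFinite L
  have C0 := mkCfg I P' L' s t t' θ hGQ hOrd hs hSubGQ hSubOrd hFull hProper htst hθt hθsub
  have C : Cfg2 I P' L' s t t' θ := by
    refine ⟨C0, hθt, hθ, ?_⟩
    intro x hx
    rw [← hθsub x hx, ← Set.ncard_coe_finset]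
    congr 1
    ext y
    simp [mem_Fb, sub_eq]
  exact ⟨C.p1, C.p2, C.p3, C.p4, C.p5⟩

end GQpaper
end
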